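/- arXiv:math/0702516 — 3 statements merged into one kernel-verified Lean document; each statement's English description precedes it below -/
import Mathlib

section
/- Let q = 2h+3 with h ≥ 1, λ = 2cos(π/q), ρ = (λ − 2 + √(λ² − 4λ + 8))/2, and 1/2 ≤ α < ρ/λ. Then the integral of (1+xy)^{−2} over the natural extension region Ω_α = ⋃_{n=1}^{4h+3} J_n × [0,H_n] described below equals log((1 + ρ)/√(2 − λ)) = log((1 + ρ)/(2 sin(π/(2q)))); equivalently, the normalizing constant of the invariant probability density C_{q,α}/(1+xy)² on Ω_α is C_{q,α} = 1/log((1 + ρ)/√(2 − λ)), independent of α in this range. -/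
open Set MeasureTheory

/-- The digit function `d(x) = ⌊|1/(xλ)| + 1 - α⌋` of the α-Rosen continued fraction. -/
noncomputable def dfun (lam α x : ℝ) : ℤ := ⌊|1 / (x * lam)| + 1 - α⌋

/-- The α-Rosen continued fraction map `T_α`. -/
noncomputable def Tmap (lam α x : ℝ) : ℝ :=
  if x = 0 then 0 else |1 / x| - lam * (dfun lam α x : ℝ)

/-- The two-dimensional natural extension map `𝒯_α(x, y) = (T_α(x), 1/(d(x)λ + ε(x)y))`. -/
noncomputable def Tnat (lam α : ℝ) (z : ℝ × ℝ) : ℝ × ℝ :=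
  (Tmap lam α z.1, 1 / ((dfun lam α z.1 : ℝ) * lam + Real.sign z.1 * z.2))



lemma one_add_pos (x y : ℝ) (hx : -1 < x) (h0 : 0 ≤ y) (h1 : y ≤ 1) : 0 < 1 + x * y := by
  have h2 : 0 ≤ (1 + x) * y := mul_nonneg (by linarith) h0
  rcases h1.lt_or_eq with h | h
  · nlinarith
  · subst h; linarith

lemma rect_io (a b H : ℝ) (ha : -1 < a) (hH0 : 0 ≤ H) (hH1 : H ≤ 1) :
    IntegrableOn (fun z : ℝ × ℝ => 1 / (1 + z.1 * z.2) ^ 2) (Ico a b ×ˢ Icc (0:ℝ) H) := by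
  have hc : IntegrableOn (fun z : ℝ × ℝ => 1 / (1 + z.1 * z.2) ^ 2) (Icc a b ×ˢ Icc (0:ℝ) H) := by
    apply ContinuousOn.integrableOn_compact (isCompact_Icc.prod isCompact_Icc)
    apply ContinuousOn.div continuousOn_const (by fun_prop)
    rintro ⟨x, y⟩ ⟨⟨hx1, hx2⟩, hy1, hy2⟩
    simp only at *
    have : 0 < 1 + x * y := one_add_pos x y (by linarith) hy1 (by linarith)
    positivity
  exact hc.mono_set (prod_mono_left Ico_subset_Icc_self)

lemma rect_int (a b H : ℝ) (ha : -1 < a) (hab : a ≤ b) (hH0 : 0 ≤ H) (hH1 : H ≤ 1) :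
    ∫ z in Ico a b ×ˢ Icc (0:ℝ) H, 1 / (1 + z.1 * z.2) ^ 2
      = Real.log (1 + b * H) - Real.log (1 + a * H) := by
  have hio := rect_io a b H ha hH0 hH1
  rw [Measure.volume_eq_prod] at hio ⊢
  rw [setIntegral_prod _ hio]
  have h1 : ∀ x ∈ Ico a b, ∫ y in Icc (0:ℝ) H, 1 / (1 + x * y) ^ 2 = H / (1 + x * H) := by
    rintro x ⟨hx1, hx2⟩
    rw [integral_Icc_eq_integral_Ioc, ← intervalIntegral.integral_of_le hH0]
    have hpos : ∀ y ∈ uIcc (0:ℝ) H, 0 < 1 + x * y := by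
      intro y hy
      rw [uIcc_of_le hH0] at hy
      exact one_add_pos x y (by linarith) hy.1 (by linarith [hy.2])
    rw [intervalIntegral.integral_eq_sub_of_hasDerivAt (f := fun y => y / (1 + x * y))]
    · simp
    · intro y hy
      have hp := hpos y hy
      have hd : HasDerivAt (fun y : ℝ => 1 + x * y) x y := by
        simpa using ((hasDerivAt_id y).const_mul x).const_add 1
      refine ((hasDerivAt_id y).div hd hp.ne').congr_deriv ?_
      simp only [id_eq, one_mul]
      congr 1; ring
    · apply ContinuousOn.intervalIntegrable
      apply ContinuousOn.div continuousOn_const (by fun_prop)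
      intro y hy
      have := hpos y hy
      positivity
  rw [setIntegral_congr_fun measurableSet_Ico h1]
  rw [integral_Ico_eq_integral_Ioc, ← intervalIntegral.integral_of_le hab]
  have hpos : ∀ x ∈ uIcc a b, 0 < 1 + x * H := by
    intro x hx
    rw [uIcc_of_le hab] at hx
    exact one_add_pos x H (by linarith [hx.1]) hH0 hH1
  rw [intervalIntegral.integral_eq_sub_of_hasDerivAt (f := fun x => Real.log (1 + x * H))]
  · intro x hx
    have hp := hpos x hx
    have hd : HasDerivAt (fun x : ℝ => 1 + x * H) H x := by
      simpa using ((hasDerivAt_id x).mul_const H).const_add 1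
    exact hd.log hp.ne'
  · apply ContinuousOn.intervalIntegrable
    apply ContinuousOn.div continuousOn_const (by fun_prop)
    intro y hy
    exact (hpos y hy).ne'

lemma union_int (c H : ℕ → ℝ) (h0 : -1 < c 0) (N : ℕ)
    (hc : ∀ k < N, c k ≤ c (k + 1)) (hH : ∀ k < N, 0 ≤ H (k + 1) ∧ H (k + 1) ≤ 1) :
    c 0 ≤ c N ∧
    (⋃ k ∈ Finset.range N, Ico (c k) (c (k+1)) ×ˢ Icc (0:ℝ) (H (k+1))) ⊆ Iio (c N) ×ˢ univ ∧
    MeasurableSet (⋃ k ∈ Finset.range N, Ico (c k) (c (k+1)) ×ˢ Icc (0:ℝ) (H (k+1))) ∧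
    IntegrableOn (fun z : ℝ × ℝ => 1 / (1 + z.1 * z.2) ^ 2)
      (⋃ k ∈ Finset.range N, Ico (c k) (c (k+1)) ×ˢ Icc (0:ℝ) (H (k+1))) ∧
    ∫ z in (⋃ k ∈ Finset.range N, Ico (c k) (c (k+1)) ×ˢ Icc (0:ℝ) (H (k+1))),
        1 / (1 + z.1 * z.2) ^ 2
      = ∑ k ∈ Finset.range N,
        (Real.log (1 + c (k+1) * H (k+1)) - Real.log (1 + c k * H (k+1))) := by
  induction N with
  | zero => simp
  | succ N ih =>
    obtain ⟨i1, i2, i3, i4, i5⟩ := ih (fun k hk => hc k (by omega)) (fun k hk => hH k (by omega))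
    have hcN := hc N (by omega)
    obtain ⟨hH0, hH1⟩ := hH N (by omega)
    have hU : (⋃ k ∈ Finset.range (N+1), Ico (c k) (c (k+1)) ×ˢ Icc (0:ℝ) (H (k+1)))
        = (⋃ k ∈ Finset.range N, Ico (c k) (c (k+1)) ×ˢ Icc (0:ℝ) (H (k+1)))
          ∪ Ico (c N) (c (N+1)) ×ˢ Icc (0:ℝ) (H (N+1)) := by
      rw [Finset.range_add_one, Finset.set_biUnion_insert, union_comm]
    have hm : MeasurableSet (Ico (c N) (c (N+1)) ×ˢ Icc (0:ℝ) (H (N+1))) :=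
      measurableSet_Ico.prod measurableSet_Icc
    have hio := rect_io (c N) (c (N+1)) (H (N+1)) (by linarith) hH0 hH1
    rw [hU]
    refine ⟨by linarith, ?_, i3.union hm, i4.union hio, ?_⟩
    · apply union_subset
      · exact i2.trans (prod_mono_left (Iio_subset_Iio hcN))
      · rintro ⟨x, y⟩ ⟨hx, hy⟩
        exact ⟨hx.2, trivial⟩
    · rw [setIntegral_union _ hm i4 hio, i5, rect_int _ _ _ (by linarith) hcN hH0 hH1,
        Finset.sum_range_succ]
      rw [Set.disjoint_left]
      rintro z hz1 hz2
      have := (i2 hz1).1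
      have h2 := hz2.1.1
      simp only [mem_Iio] at this
      linarith

lemma Tstep (lam α x y : ℝ) (d : ℤ) (hl : 0 < lam) (hx : x ≠ 0) (hy : y = |1 / x| - lam * d)
    (h1 : (α - 1) * lam ≤ y) (h2 : y < α * lam) : Tmap lam α x = y := by
  have hd : dfun lam α x = d := by
    unfold dfun
    rw [Int.floor_eq_iff]
    have e : |1 / (x * lam)| = |1 / x| / lam := by
      rw [← div_div, abs_div, abs_of_pos hl]
    have e2 : |1 / x| / lam = y / lam + d := by rw [hy]; field_simp; ring
    rw [e, e2]
    have h3 : α - 1 ≤ y / lam := by rwa [le_div_iff₀ hl]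
    have h4 : y / lam < α := by rwa [div_lt_iff₀ hl]
    constructor <;> linarith
  unfold Tmap
  rw [if_neg hx, hd, hy]

lemma Tneg (lam α x y : ℝ) (d : ℤ) (hl : 0 < lam) (hx : x < 0) (hy : y = -1 / x - lam * d)
    (h1 : (α - 1) * lam ≤ y) (h2 : y < α * lam) : Tmap lam α x = y := by
  apply Tstep lam α x y d hl hx.ne _ h1 h2
  rw [hy, abs_of_neg (by simpa using hx)]; ring

/-- The branch `x ↦ -1/x - λ`. -/
noncomputable def Mm (lam x : ℝ) : ℝ := -1 / x - lam

lemma Mm_le (lam x y : ℝ) (hxy : x ≤ y) (hy : y < 0) : Mm lam x ≤ Mm lam y := by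
  unfold Mm
  have hx : x < 0 := by linarith
  have : 1 / y ≤ 1 / x := by rw [one_div_le_one_div_of_neg hy hx]; exact hxy
  have e1 : -1 / x = - (1 / x) := by ring
  have e2 : -1 / y = - (1 / y) := by ring
  rw [e1, e2]; linarith

lemma Mm_lt (lam x y : ℝ) (hxy : x < y) (hy : y < 0) : Mm lam x < Mm lam y := by
  unfold Mm
  have hx : x < 0 := by linarith
  have : 1 / y < 1 / x := by rw [one_div_lt_one_div_of_neg hy hx]; exact hxy
  have e1 : -1 / x = - (1 / x) := by ring
  have e2 : -1 / y = - (1 / y) := by ring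
  rw [e1, e2]; linarith

/-- Closed form of the iterates from the recurrence for `B`. -/
lemma closed_form (lam v : ℝ) (B : ℤ → ℝ) (x : ℕ → ℝ) (h : ℕ)
    (hB0 : B 0 = 0) (hB1 : B 1 = 1) (hrec : ∀ n : ℤ, B (n + 1) = lam * B n - B (n - 1))
    (hx0 : x 0 = -v) (hxs : ∀ n, x (n + 1) = Mm lam (x n)) (hneg : ∀ n < h, x n < 0) :
    ∀ n ≤ h, 0 < B n * v - B ((n : ℤ) - 1) ∧
      x n = -(B ((n : ℤ) + 1) * v - B n) / (B n * v - B ((n : ℤ) - 1)) := by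
  have hBm : B (-1) = -1 := by
    have := hrec 0
    simp [hB0, hB1] at this; linarith
  intro n
  induction n with
  | zero => intro _; simp [hB0, hB1, hBm, hx0]
  | succ n ih =>
    intro hn
    obtain ⟨p, e⟩ := ih (by omega)
    have hneg' := hneg n (by omega)
    rw [e] at hneg'
    have hp : 0 < B ((n : ℤ) + 1) * v - B n := by
      rw [div_neg_iff] at hneg'
      rcases hneg' with h | h
      · linarith [h.2]
      · linarith [h.1]
    have e1 : ((n + 1 : ℕ) : ℤ) = (n : ℤ) + 1 := by push_cast; ring
    rw [e1]
    have e2 : (n : ℤ) + 1 - 1 = n := by ring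
    rw [e2]
    refine ⟨hp, ?_⟩
    rw [hxs, e, hrec ((n : ℤ) + 1), e2]
    have := hrec n
    unfold Mm
    have key : ∀ p q : ℝ, 0 < p → 0 < q → -1 / (-p / q) - lam = (q - lam * p) / p := by
      intro p q hp hq
      field_simp
    rw [key _ _ hp p]
    congr 1
    linear_combination -this

lemma neg_of_pos (lam v : ℝ) (B : ℤ → ℝ) (x : ℕ → ℝ) (h : ℕ)
    (hB0 : B 0 = 0) (hB1 : B 1 = 1) (hrec : ∀ n : ℤ, B (n + 1) = lam * B n - B (n - 1))
    (hx0 : x 0 = -v) (hxs : ∀ n, x (n + 1) = Mm lam (x n))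
    (hpos : ∀ n : ℕ, n ≤ h → 0 < B ((n : ℤ) + 1) * v - B n) : ∀ m ≤ h + 1, ∀ n < m, x n < 0 := by
  intro m
  induction m with
  | zero => intro _ n hn; omega
  | succ m ih =>
    intro hm n hn
    rcases Nat.lt_succ_iff_lt_or_eq.mp hn with hn | hn
    · exact ih (by omega) n hn
    · subst hn
      obtain ⟨p, e⟩ := closed_form lam v B x n hB0 hB1 hrec hx0 hxs (ih (by omega)) n le_rfl
      rw [e, neg_div]
      have := div_pos (hpos n (by omega)) p
      linarith

structure Setup (h : ℕ) (lam ρ w : ℝ) (B : ℤ → ℝ) : Prop where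
  hh : 1 ≤ h
  l1 : 1 < lam
  l2 : lam < 2
  rho : ρ ^ 2 + (2 - lam) * ρ - 1 = 0
  rpos : 0 < ρ
  r1 : ρ < 1
  w1 : lam / 2 ≤ w
  w2 : w < ρ
  B0 : B 0 = 0
  B1 : B 1 = 1
  recB : ∀ n : ℤ, B (n + 1) = lam * B n - B (n - 1)
  pos : ∀ n : ℕ, 1 ≤ n → n ≤ h + 2 → 0 < B n
  mono : ∀ n : ℕ, n ≤ h + 1 → B n ≤ B ((n : ℤ) + 1)
  eq : B ((h : ℤ) + 2) = B ((h : ℤ) + 1)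

structure Seqs (h : ℕ) (lam w : ℝ) (cl cr pl pr : ℕ → ℝ) : Prop where
  cl0 : cl 0 = w - lam
  cr0 : cr 0 = -w
  pl0 : pl 0 = -1 / cl h - 2 * lam
  pr0 : pr 0 = -1 / cr h - 2 * lam
  cls : ∀ n, cl (n + 1) = Mm lam (cl n)
  crs : ∀ n, cr (n + 1) = Mm lam (cr n)
  pls : ∀ n, pl (n + 1) = Mm lam (pl n)
  prs : ∀ n, pr (n + 1) = Mm lam (pr n)

section
variable {h : ℕ} {lam ρ w : ℝ} {B : ℤ → ℝ} {cl cr pl pr : ℕ → ℝ}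

lemma Setup.Bh (S : Setup h lam ρ w B) : B h = (lam - 1) * B ((h : ℤ) + 1) := by
  have := S.recB ((h : ℤ) + 1)
  rw [show (h : ℤ) + 1 + 1 = h + 2 by ring, show (h : ℤ) + 1 - 1 = h by ring, S.eq] at this
  linarith

lemma Setup.Bh1 (S : Setup h lam ρ w B) :
    B ((h : ℤ) - 1) = (lam ^ 2 - lam - 1) * B ((h : ℤ) + 1) := by
  have := S.recB h
  rw [S.Bh] at this
  linarith

lemma Setup.Bpos (S : Setup h lam ρ w B) : 0 < B ((h : ℤ) + 1) := by
  have := S.pos (h + 1) (by omega) (by omega)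
  exact_mod_cast this

/-- positivity of `B_{n+1} v - B_n` -/
lemma Setup.Dpos (S : Setup h lam ρ w B) (v : ℝ) (hv : lam - 1 < v) (n : ℕ) (hn : n ≤ h) :
    0 < B ((n : ℤ) + 1) * v - B n := by
  have h1 := S.recB ((n : ℤ) + 1)
  have h2 := S.mono (n + 1) (by omega)
  have h3 := S.pos (n + 1) (by omega) (by omega)
  push_cast at h2 h3
  rw [show (n : ℤ) + 1 - 1 = n by ring] at h1
  nlinarith [mul_pos h3 (sub_pos.2 hv)]

/-- the quadratic is negative at `w` -/
lemma Setup.quad (S : Setup h lam ρ w B) : w ^ 2 + (2 - lam) * w - 1 < 0 := by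
  have := S.rho
  have h1 := S.w1
  have h2 := S.w2
  have h3 := S.l1
  have h4 := S.l2
  nlinarith

lemma val_h (S : Setup h lam ρ w B) (v : ℝ) (x : ℕ → ℝ) (hx0 : x 0 = -v)
    (hxs : ∀ n, x (n + 1) = Mm lam (x n)) (hneg : ∀ n < h, x n < 0) :
    0 < (lam - 1) * v - (lam ^ 2 - lam - 1) ∧
      x h = -(v - (lam - 1)) / ((lam - 1) * v - (lam ^ 2 - lam - 1)) := by
  obtain ⟨p, e⟩ := closed_form lam v B x h S.B0 S.B1 S.recB hx0 hxs hneg h le_rfl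
  rw [S.Bh, S.Bh1] at p e
  have hb := S.Bpos
  have p' : 0 < (lam - 1) * v - (lam ^ 2 - lam - 1) := by
    by_contra hc
    push Not at hc
    nlinarith
  refine ⟨p', ?_⟩
  rw [e]
  rw [div_eq_div_iff p.ne' p'.ne']
  ring

structure Chain (h : ℕ) (lam w : ℝ) (cl cr pl pr : ℕ → ℝ) : Prop where
  clneg : ∀ n ≤ h, cl n < 0
  crneg : ∀ n ≤ h, cr n < 0
  le : ∀ n ≤ h, cr n ≤ cl n
  chain : ∀ n < h, cl n ≤ pr n ∧ pr n ≤ pl n ∧ pl n < cr (n + 1)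
  last1 : cl h ≤ pr h
  last2 : pr h ≤ pl h
  last3 : pl h < w
  clh : cl h = -(1 - w) / (1 - (lam - 1) * w)
  clhd : 0 < 1 - (lam - 1) * w
  prh : pr h = -(2 * w - lam) / (lam * w - 2 * lam + 2)
  prhd : 0 < lam * w - 2 * lam + 2
  plh : pl h = (2 * w - lam) / (lam ^ 2 - 2 * lam + 2 - lam * w)
  plhd : 0 < lam ^ 2 - 2 * lam + 2 - lam * w
  pr0 : pr 0 = (-(lam + 1) * w + lam ^ 2 - lam + 1) / (w - lam + 1)
  pl0 : pl 0 = (1 - 2 * lam + (lam + 1) * w) / (1 - w)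

lemma chain_of (S : Setup h lam ρ w B) (Q : Seqs h lam w cl cr pl pr) :
    Chain h lam w cl cr pl pr := by
  have l1 := S.l1
  have l2 := S.l2
  have w1 := S.w1
  have w2 := S.w2
  have r1 := S.r1
  have hh := S.hh
  have quad := S.quad
  have hw : 0 < w := by linarith
  have clneg : ∀ n ≤ h, cl n < 0 := fun n hn =>
    neg_of_pos lam (lam - w) B cl h S.B0 S.B1 S.recB (by rw [Q.cl0]; ring) Q.cls
      (fun n hn => S.Dpos _ (by linarith) n hn) (h + 1) le_rfl n (by omega)
  have crneg : ∀ n ≤ h, cr n < 0 := fun n hn =>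
    neg_of_pos lam w B cr h S.B0 S.B1 S.recB (by rw [Q.cr0]) Q.crs
      (fun n hn => S.Dpos _ (by linarith) n hn) (h + 1) le_rfl n (by omega)
  have le : ∀ n ≤ h, cr n ≤ cl n := by
    intro n
    induction n with
    | zero => intro _; rw [Q.cl0, Q.cr0]; linarith
    | succ n ih =>
      intro hn
      rw [Q.cls, Q.crs]
      exact Mm_le _ _ _ (ih (by omega)) (clneg n (by omega))
  obtain ⟨clhd, clh⟩ := val_h S (lam - w) cl (by rw [Q.cl0]; ring) Q.cls
    (fun n hn => clneg n (by omega))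
  have e1 : (lam - 1) * (lam - w) - (lam ^ 2 - lam - 1) = 1 - (lam - 1) * w := by ring
  have e2 : lam - w - (lam - 1) = 1 - w := by ring
  rw [e1] at clhd clh
  rw [e2] at clh
  obtain ⟨crhd, crh⟩ := val_h S w cr Q.cr0 Q.crs (fun n hn => crneg n (by omega))
  have i1 : 0 < 1 - w := by linarith
  have i2 : 0 < w - lam + 1 := by linarith
  have i2' : 0 < w - (lam - 1) := by linarith
  have pl0 : pl 0 = (1 - 2 * lam + (lam + 1) * w) / (1 - w) := by
    rw [Q.pl0, clh]
    field_simp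
    ring
  have pr0 : pr 0 = (-(lam + 1) * w + lam ^ 2 - lam + 1) / (w - lam + 1) := by
    rw [Q.pr0, crh, eq_div_iff i2.ne', neg_div (_ - _) (_ - _)]
    have : -1 / -((w - (lam - 1)) / ((lam - 1) * w - (lam ^ 2 - lam - 1)))
      = ((lam - 1) * w - (lam ^ 2 - lam - 1)) / (w - (lam - 1)) := by field_simp
    rw [this]
    field_simp
    ring
  have crone : cr 1 = 1 / w - lam := by
    rw [show (1 : ℕ) = 0 + 1 from rfl, Q.crs, Q.cr0]
    unfold Mm
    rw [neg_div_neg_eq]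
  have base : cl 0 ≤ pr 0 ∧ pr 0 ≤ pl 0 ∧ pl 0 < cr (0 + 1) := by
    refine ⟨?_, ?_, ?_⟩
    · rw [Q.cl0, pr0, le_div_iff₀ i2]
      nlinarith
    · have := Mm_le lam _ _ (le h le_rfl) (clneg h le_rfl)
      unfold Mm at this
      rw [Q.pl0, Q.pr0]; linarith
    · rw [zero_add, crone, pl0, div_lt_iff₀ i1]
      have : (1 / w - lam) * (1 - w) = (1 - w) / w - lam * (1 - w) := by ring
      rw [this, lt_sub_iff_add_lt, lt_div_iff₀ hw]
      nlinarith
  have chain : ∀ n < h, cl n ≤ pr n ∧ pr n ≤ pl n ∧ pl n < cr (n + 1) := by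
    intro n
    induction n with
    | zero => intro _; exact base
    | succ n ih =>
      intro hn
      obtain ⟨a, b, c⟩ := ih (by omega)
      have hneg := crneg (n + 1) (by omega)
      rw [Q.cls, Q.prs, Q.pls, Q.crs (n + 1)]
      exact ⟨Mm_le _ _ _ a (by linarith), Mm_le _ _ _ b (by linarith), Mm_lt _ _ _ c hneg⟩
  have plneg : ∀ n < h, pl n < 0 := fun n hn =>
    (chain n hn).2.2.trans (crneg (n + 1) (by omega))
  have prneg : ∀ n < h, pr n < 0 := fun n hn =>
    (chain n hn).2.1.trans_lt (plneg n hn)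
  obtain ⟨a, b⟩ := val_h S (-pl 0) pl (by ring) Q.pls plneg
  obtain ⟨a', b'⟩ := val_h S (-pr 0) pr (by ring) Q.prs prneg
  have ea : (lam - 1) * (-pl 0) - (lam ^ 2 - lam - 1)
      = (lam ^ 2 - 2 * lam + 2 - lam * w) / (1 - w) := by
    rw [pl0]; field_simp; ring
  have ea' : (lam - 1) * (-pr 0) - (lam ^ 2 - lam - 1)
      = (lam * w - 2 * lam + 2) / (w - lam + 1) := by
    rw [pr0]; field_simp; ring
  have eb : -(-pl 0 - (lam - 1)) = (2 * w - lam) / (1 - w) := by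
    rw [pl0]; field_simp; ring
  have eb' : -(-pr 0 - (lam - 1)) = -(2 * w - lam) / (w - lam + 1) := by
    rw [pr0]; field_simp; ring
  rw [ea] at a b
  rw [ea'] at a' b'
  rw [eb, div_div_div_cancel_right₀ i1.ne'] at b
  rw [eb', div_div_div_cancel_right₀ i2.ne'] at b'
  have plhd := (div_pos_iff_of_pos_right i1).1 a
  have prhd := (div_pos_iff_of_pos_right i2).1 a'
  obtain ⟨k, rfl⟩ : ∃ k, h = k + 1 := ⟨h - 1, by omega⟩
  obtain ⟨c1, c2, c3⟩ := chain k (by omega)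
  refine ⟨clneg, crneg, le, chain, ?_, ?_, ?_, clh, clhd, b', prhd, b, plhd, pr0, pl0⟩
  · rw [Q.cls, Q.prs]
    exact Mm_le _ _ _ c1 (prneg k (by omega))
  · rw [Q.prs, Q.pls]
    exact Mm_le _ _ _ c2 (plneg k (by omega))
  · rw [b, div_lt_iff₀ plhd]
    nlinarith

end

structure HF (h : ℕ) (lam ρ : ℝ) (H : ℕ → ℝ) : Prop where
  hrec : ∀ k, 1 ≤ k → k + 4 ≤ 4 * h + 3 → H (k + 4) * (lam - H k) = 1
  bd : ∀ k, 1 ≤ k → k ≤ 4 * h + 3 → 0 < H k ∧ H k ≤ 1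
  H1 : H 1 = (1 - ρ) / (1 - (lam - 1) * ρ)
  H2 : H 2 = 1 / (1 + lam)
  H3 : H 3 = 1 / (lam + ρ)
  H4 : H 4 = 1 / lam
  Ha : H (4 * h + 1) = lam - ρ
  Hb : H (4 * h + 2) = lam / 2
  Hc : H (4 * h + 3) = ρ

lemma one_add_div_mul (n d k : ℝ) (hd : d ≠ 0) : 1 + n / d * k = (d + n * k) / d := by
  field_simp

lemma one_add_mul_div (n d k : ℝ) (hd : d ≠ 0) : 1 + k * (n / d) = (d + n * k) / d := by
  field_simp

lemma log_block {a1 a2 a3 a4 b1 b2 b3 b4 x : ℝ} (ha1 : 0 < a1) (ha2 : 0 < a2) (ha3 : 0 < a3)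
    (ha4 : 0 < a4) (hb1 : 0 < b1) (hb2 : 0 < b2) (hb3 : 0 < b3) (hb4 : 0 < b4) (hx : 0 < x)
    (e : a1 * a2 * a3 * a4 * x = b1 * b2 * b3 * b4) :
    Real.log a1 + Real.log a2 + Real.log a3 + Real.log a4 + Real.log x
      = Real.log b1 + Real.log b2 + Real.log b3 + Real.log b4 := by
  rw [← Real.log_mul (by positivity) (by positivity), ← Real.log_mul (by positivity) (by positivity),
    ← Real.log_mul (by positivity) (by positivity), ← Real.log_mul (by positivity) (by positivity),
    e, Real.log_mul (by positivity) (by positivity), Real.log_mul (by positivity) (by positivity),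
    Real.log_mul (by positivity) (by positivity)]

lemma fac_step (lam x H H' : ℝ) (hx : x < 0) (hH : H' * (lam - H) = 1) :
    1 + Mm lam x * H' = (1 + x * H) * H' / (-x) := by
  unfold Mm
  have : x ≠ 0 := hx.ne
  rw [eq_div_iff (by simpa using this)]
  have e : (-1 / x - lam) * H' * -x = (1 + lam * x) * H' := by field_simp; ring
  linear_combination e + x * hH

section
variable {h : ℕ} {lam ρ w : ℝ} {B : ℤ → ℝ} {cl cr pl pr H : ℕ → ℝ}

lemma block_base (S : Setup h lam ρ w B) (Q : Seqs h lam w cl cr pl pr)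
    (C : Chain h lam w cl cr pl pr) (F : HF h lam ρ H) :
    (1 + pr 0 * H 1) * (1 + pl 0 * H 2) * (1 + cr 1 * H 3) * (1 + cl 1 * H 4) * (- cl 0)
      = (1 + cl 0 * H 1) * (1 + pr 0 * H 2) * (1 + pl 0 * H 3) * (1 + cr 1 * H 4) := by
  have l1 := S.l1
  have l2 := S.l2
  have w1 := S.w1
  have w2 := S.w2
  have r1 := S.r1
  have rp := S.rpos
  have rho := S.rho
  have hw : 0 < w := by linarith
  have crone : cr 1 = 1 / w - lam := by
    rw [show (1 : ℕ) = 0 + 1 from rfl, Q.crs, Q.cr0]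
    unfold Mm
    rw [neg_div_neg_eq]
  have clone : cl 1 = 1 / (lam - w) - lam := by
    rw [show (1 : ℕ) = 0 + 1 from rfl, Q.cls, Q.cl0]
    unfold Mm
    rw [← neg_sub lam w, neg_div_neg_eq]
  have i1 : 0 < 1 - w := by linarith
  have i2 : 0 < w - lam + 1 := by linarith
  have i3 : 0 < 1 - (lam - 1) * ρ := by nlinarith
  have i4 : 0 < 1 + lam := by linarith
  have i5 : 0 < lam + ρ := by linarith
  have i6 : 0 < lam := by linarith
  have i7 : 0 < lam - w := by linarith
  have f1 : 1 + pr 0 * H 1 = (1 + ρ - lam) ^ 2 * (1 + ρ * w)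
      / ((w - lam + 1) * (1 - (lam - 1) * ρ)) := by
    rw [C.pr0, F.H1, div_mul_div_comm, eq_div_iff (by positivity), add_mul,
      div_mul_cancel₀ _ (by positivity)]
    linear_combination (-(ρ * w - lam * w + 1)) * rho
  have f2 : 1 + pl 0 * H 2 = (2 - lam) / ((1 - w) * (1 + lam)) := by
    rw [C.pl0, F.H2]; field_simp; ring
  have f3 : 1 + cr 1 * H 3 = (1 + ρ * w) / (w * (lam + ρ)) := by
    rw [crone, F.H3]; field_simp; ring
  have f4 : 1 + cl 1 * H 4 = 1 / ((lam - w) * lam) := by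
    rw [clone, F.H4]; field_simp; ring
  have f5 : 1 + cl 0 * H 1 = (1 + ρ - lam) * (1 + ρ * w) / (1 - (lam - 1) * ρ) := by
    rw [Q.cl0, F.H1, one_add_mul_div _ _ _ i3.ne']; congr 1; linear_combination (-w) * rho
  have f6 : 1 + pr 0 * H 2 = (2 - lam) / ((w - lam + 1) * (1 + lam)) := by
    rw [C.pr0, F.H2]; field_simp; ring
  have f7 : 1 + pl 0 * H 3 = (1 + ρ - lam) * (1 + ρ * w) / ((1 - w) * (lam + ρ)) := by
    rw [C.pl0, F.H3]; field_simp; linear_combination (-w) * rho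
  have f8 : 1 + cr 1 * H 4 = 1 / (w * lam) := by
    rw [crone, F.H4]; field_simp; ring
  rw [f1, f2, f3, f4, f5, f6, f7, f8, Q.cl0]
  field_simp
  ring

lemma block (S : Setup h lam ρ w B) (Q : Seqs h lam w cl cr pl pr)
    (C : Chain h lam w cl cr pl pr) (F : HF h lam ρ H) : ∀ n < h,
    (1 + pr n * H (4 * n + 1)) * (1 + pl n * H (4 * n + 2)) * (1 + cr (n + 1) * H (4 * n + 3))
        * (1 + cl (n + 1) * H (4 * n + 4)) * (- cl n)
      = (1 + cl n * H (4 * n + 1)) * (1 + pr n * H (4 * n + 2)) * (1 + pl n * H (4 * n + 3))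
        * (1 + cr (n + 1) * H (4 * n + 4)) := by
  intro n
  induction n with
  | zero => intro _; simpa using block_base S Q C F
  | succ n ih =>
    intro hn
    have ih := ih (by omega)
    obtain ⟨c1, c2, c3⟩ := C.chain n (by omega)
    have n1 := C.clneg n (by omega)
    have n2 := C.clneg (n + 1) (by omega)
    have n3 := C.crneg (n + 1) (by omega)
    have n4 : pl n < 0 := by linarith
    have n5 : pr n < 0 := by linarith
    have r1 := F.hrec (4 * n + 1) (by omega) (by omega)
    have r2 := F.hrec (4 * n + 2) (by omega) (by omega)
    have r3 := F.hrec (4 * n + 3) (by omega) (by omega)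
    have r4 := F.hrec (4 * n + 4) (by omega) (by omega)
    rw [show 4 * (n + 1) + 1 = 4 * n + 1 + 4 by ring, show 4 * (n + 1) + 2 = 4 * n + 2 + 4 by ring,
      show 4 * (n + 1) + 3 = 4 * n + 3 + 4 by ring, show 4 * (n + 1) + 4 = 4 * n + 4 + 4 by ring]
    rw [Q.prs, Q.pls, Q.crs (n + 1), Q.cls (n + 1)]
    rw [fac_step _ _ _ _ n5 r1, fac_step _ _ _ _ n4 r2, fac_step _ _ _ _ n3 r3,
      fac_step _ _ _ _ n2 r4, fac_step _ _ _ _ n5 r2, fac_step _ _ _ _ n4 r3,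
      fac_step _ _ _ _ n3 r4]
    have e : 1 + cl (n + 1) * H (4 * n + 1 + 4)
        = (1 + cl n * H (4 * n + 1)) * H (4 * n + 1 + 4) / (- cl n) := by
      rw [Q.cls, fac_step _ _ _ _ n1 r1]
    rw [e]
    generalize H (4 * n + 1 + 4) = K1 at *
    generalize H (4 * n + 2 + 4) = K2 at *
    generalize H (4 * n + 3 + 4) = K3 at *
    generalize H (4 * n + 4 + 4) = K4 at *
    generalize 1 + pr n * H (4 * n + 1) = a1 at *
    generalize 1 + pl n * H (4 * n + 2) = a2 at *
    generalize 1 + cr (n + 1) * H (4 * n + 3) = a3 at *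
    generalize 1 + cl (n + 1) * H (4 * n + 4) = a4 at *
    generalize 1 + cl n * H (4 * n + 1) = b1 at *
    generalize 1 + pr n * H (4 * n + 2) = b2 at *
    generalize 1 + pl n * H (4 * n + 3) = b3 at *
    generalize 1 + cr (n + 1) * H (4 * n + 4) = b4 at *
    have m1 := n1.ne
    have m2 := n2.ne
    have m3 := n3.ne
    have m4 := n4.ne
    have m5 := n5.ne
    have L : a1 * K1 / -pr n * (a2 * K2 / -pl n) * (a3 * K3 / -cr (n + 1))
        * (a4 * K4 / -cl (n + 1)) * (-cl (n + 1))
        = (a1 * a2 * a3 * a4 * (-cl n)) * (K1 * K2 * K3 * K4)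
          / (cl n * pr n * pl n * cr (n + 1)) := by
      field_simp
    rw [L, ih]
    field_simp

lemma last_block (S : Setup h lam ρ w B) (C : Chain h lam w cl cr pl pr) (F : HF h lam ρ H) :
    (1 + pr h * H (4 * h + 1)) * (1 + pl h * H (4 * h + 2)) * (1 + w * H (4 * h + 3))
      * ((1 - ρ) * B ((h : ℤ) + 1))
    = (1 + cl h * H (4 * h + 1)) * (1 + pr h * H (4 * h + 2)) * (1 + pl h * H (4 * h + 3))
      * (B h * (lam - w) - B ((h : ℤ) - 1)) * ρ := by
  have rho := S.rho
  have d1 := C.clhd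
  have d2 := C.prhd
  have d3 := C.plhd
  have f1 : 1 + pr h * (lam - ρ) = (w * (2 * ρ - lam) + lam ^ 2 - 2 * lam + 2 - lam * ρ)
      / (lam * w - 2 * lam + 2) := by
    rw [C.prh, one_add_div_mul _ _ _ d2.ne']; congr 1; ring
  have f2 : 1 + pl h * (lam / 2) = ((lam - 2) ^ 2 / 2) / (lam ^ 2 - 2 * lam + 2 - lam * w) := by
    rw [C.plh, one_add_div_mul _ _ _ d3.ne']; congr 1; ring
  have f3 : 1 + pr h * (lam / 2) = ((lam - 2) ^ 2 / 2) / (lam * w - 2 * lam + 2) := by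
    rw [C.prh, one_add_div_mul _ _ _ d2.ne']; congr 1; ring
  have f4 : 1 + pl h * ρ = (w * (2 * ρ - lam) + lam ^ 2 - 2 * lam + 2 - lam * ρ)
      / (lam ^ 2 - 2 * lam + 2 - lam * w) := by
    rw [C.plh, one_add_div_mul _ _ _ d3.ne']; congr 1; ring
  have f5 : (1 + cl h * (lam - ρ)) * ρ * (1 - (lam - 1) * w) = (1 - ρ) * (1 + w * ρ) := by
    have : (1 + cl h * (lam - ρ)) * (1 - (lam - 1) * w) = 1 - lam + ρ + w * (1 - ρ) := by
      rw [C.clh, one_add_div_mul _ _ _ d1.ne', div_mul_cancel₀ _ d1.ne']; ring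
    linear_combination ρ * this + rho
  rw [F.Ha, F.Hb, F.Hc, f1, f2, f3, f4, S.Bh, S.Bh1]
  generalize (w * (2 * ρ - lam) + lam ^ 2 - 2 * lam + 2 - lam * ρ) = X
  generalize ((lam - 2) ^ 2 / 2) = Y
  generalize B ((h : ℤ) + 1) = Z
  linear_combination (-(X / (lam * w - 2 * lam + 2) * (Y / (lam ^ 2 - 2 * lam + 2 - lam * w)) * Z)) * f5

lemma sumlog (S : Setup h lam ρ w B) (Q : Seqs h lam w cl cr pl pr)
    (C : Chain h lam w cl cr pl pr) (F : HF h lam ρ H) (c : ℕ → ℝ)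
    (c0 : ∀ n ≤ h, c (4 * n) = cl n) (c1 : ∀ n ≤ h, c (4 * n + 1) = pr n)
    (c2 : ∀ n ≤ h, c (4 * n + 2) = pl n) (c3 : ∀ n < h, c (4 * n + 3) = cr (n + 1))
    (c4 : c (4 * h + 3) = w) (hc : ∀ k ≤ 4 * h + 3, -1 < c k) :
    ∑ k ∈ Finset.range (4 * h + 3),
        (Real.log (1 + c (k+1) * H (k+1)) - Real.log (1 + c k * H (k+1)))
      = Real.log (ρ / ((1 - ρ) * B ((h : ℤ) + 1))) := by
  have p1 : ∀ k < 4 * h + 3, 0 < 1 + c (k + 1) * H (k + 1) := fun k hk =>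
    one_add_pos _ _ (hc _ (by omega)) (F.bd (k + 1) (by omega) (by omega)).1.le
      (F.bd (k + 1) (by omega) (by omega)).2
  have p2 : ∀ k < 4 * h + 3, 0 < 1 + c k * H (k + 1) := fun k hk =>
    one_add_pos _ _ (hc _ (by omega)) (F.bd (k + 1) (by omega) (by omega)).1.le
      (F.bd (k + 1) (by omega) (by omega)).2
  have cf := closed_form lam (lam - w) B cl h S.B0 S.B1 S.recB (by rw [Q.cl0]; ring) Q.cls
    (fun n hn => C.clneg n (by omega))
  have part : ∀ n ≤ h, ∑ k ∈ Finset.range (4 * n),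
        (Real.log (1 + c (k+1) * H (k+1)) - Real.log (1 + c k * H (k+1)))
      = - Real.log (B n * (lam - w) - B ((n : ℤ) - 1)) := by
    intro n
    induction n with
    | zero =>
      intro _
      have hBm : B (-1) = -1 := by
        have := S.recB 0
        simp [S.B0, S.B1] at this; linarith
      simp [S.B0, hBm]
    | succ n ih =>
      intro hn
      have bl := block S Q C F n (by omega)
      rw [show 4 * (n + 1) = 4 * n + 1 + 1 + 1 + 1 by ring, Finset.sum_range_succ,
        Finset.sum_range_succ, Finset.sum_range_succ, Finset.sum_range_succ, ih (by omega)]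
      have a1 := p1 (4 * n) (by omega)
      have a2 := p1 (4 * n + 1) (by omega)
      have a3 := p1 (4 * n + 2) (by omega)
      have a4 := p1 (4 * n + 3) (by omega)
      have b1 := p2 (4 * n) (by omega)
      have b2 := p2 (4 * n + 1) (by omega)
      have b3 := p2 (4 * n + 2) (by omega)
      have b4 := p2 (4 * n + 3) (by omega)
      have d0 := c0 n (by omega)
      have d1 := c1 n (by omega)
      have d2 := c2 n (by omega)
      have d3 := c3 n (by omega)
      have d4 := c0 (n + 1) (by omega)
      rw [show 4 * (n + 1) = 4 * n + 4 by ring] at d4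
      simp only [add_assoc, Nat.reduceAdd] at a1 a2 a3 a4 b1 b2 b3 b4 ⊢
      simp only [d0, d1, d2, d3, d4] at a1 a2 a3 a4 b1 b2 b3 b4 ⊢
      obtain ⟨e1, e2⟩ := cf n (by omega)
      have e3 : 0 < B ((n : ℤ) + 1) * (lam - w) - B n :=
        S.Dpos _ (by linarith [S.w2, S.r1]) n (by omega)
      have e4 : 0 < - cl n := by linarith [C.clneg n (by omega)]
      have e5 : Real.log (- cl n) = Real.log (B ((n : ℤ) + 1) * (lam - w) - B n)
          - Real.log (B n * (lam - w) - B ((n : ℤ) - 1)) := by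
        rw [← Real.log_div e3.ne' e1.ne', e2]
        congr 1; ring
      have bl' := log_block a1 a2 a3 a4 b1 b2 b3 b4 e4 bl
      push_cast
      rw [show (n : ℤ) + 1 - 1 = n by ring]
      linarith
  have lb := last_block S C F
  rw [show 4 * h + 3 = 4 * h + 1 + 1 + 1 by ring, Finset.sum_range_succ,
        Finset.sum_range_succ, Finset.sum_range_succ, part h le_rfl]
  have a1 := p1 (4 * h) (by omega)
  have a2 := p1 (4 * h + 1) (by omega)
  have a3 := p1 (4 * h + 2) (by omega)
  have b1 := p2 (4 * h) (by omega)
  have b2 := p2 (4 * h + 1) (by omega)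
  have b3 := p2 (4 * h + 2) (by omega)
  have d0 := c0 h (by omega)
  have d1 := c1 h (by omega)
  have d2 := c2 h (by omega)
  simp only [add_assoc, Nat.reduceAdd] at a1 a2 a3 b1 b2 b3 ⊢
  simp only [d0, d1, d2, c4] at a1 a2 a3 b1 b2 b3 ⊢
  obtain ⟨e1, e2⟩ := cf h le_rfl
  have q1 : 0 < 1 - ρ := by linarith [S.r1]
  have q2 := S.Bpos
  have q3 := S.rpos
  rw [Real.log_div q3.ne' (by positivity)]
  have bl' := log_block a1 a2 a3 (mul_pos q1 q2) b1 b2 (mul_pos b3 e1) q3 one_pos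
    (by linear_combination lb)
  rw [Real.log_mul b3.ne' e1.ne', Real.log_one] at bl'
  linarith

end

lemma seq_anti (lam : ℝ) (A : ℕ → ℝ) (h : ℕ) (l2 : lam < 2)
    (hrec : ∀ m, A (m + 2) = lam * A (m + 1) - A m) (h0 : A 1 ≤ A 0)
    (hpos : ∀ m ≤ h + 1, 0 < A m) : ∀ m ≤ h, A (m + 1) ≤ A m := by
  intro m
  induction m with
  | zero => intro _; simpa using h0
  | succ m ih =>
    intro hm
    have := ih (by omega)
    have hp := hpos (m + 1) (by omega)
    rw [show m + 1 + 1 = m + 2 by ring, hrec m]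
    nlinarith

lemma ratio_rec (lam : ℝ) (a b c : ℝ) (hb : b ≠ 0) (ha : a ≠ 0) (e : c = lam * b - a) :
    b / a * (lam - c / b) = 1 := by
  rw [e]; field_simp; ring

section
variable {h : ℕ} {lam ρ w : ℝ} {B : ℤ → ℝ} {H : ℕ → ℝ}

lemma HF_of (S : Setup h lam ρ w B)
    (hH4 : ∀ n : ℕ, 1 ≤ n → n ≤ h → H (4 * n) = B n / B ((n : ℤ) + 1))
    (hH4m2 : ∀ n : ℕ, 1 ≤ n → n ≤ h + 1 →
      H (4 * n - 2) = (B ((n : ℤ) - 1) + B n) / (B n + B ((n : ℤ) + 1)))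
    (hH4h3 : ∀ n : ℕ, n ≤ h →
      H (4 * h + 3 - 4 * n) = (B ((n : ℤ) + 1) * ρ - B n) / (B n * ρ - B ((n : ℤ) - 1)))
    (hH4h1 : ∀ n : ℕ, n ≤ h →
      H (4 * h + 1 - 4 * n)
        = (B ((n : ℤ) + 1) * ρ - B ((n : ℤ) + 2)) / (B n * ρ - B ((n : ℤ) + 1))) :
    HF h lam ρ H := by
  have l1 := S.l1
  have l2 := S.l2
  have r1 := S.r1
  have rp := S.rpos
  have w1 := S.w1
  have w2 := S.w2
  have hh := S.hh
  have rho := S.rho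
  have bp := S.Bpos
  have hB2 : B 2 = lam := by
    have := S.recB 1
    norm_num [S.B0, S.B1] at this; exact this
  have hBm : B (-1) = -1 := by
    have := S.recB 0
    simp [S.B0, S.B1] at this; linarith
  have rec2 : ∀ n : ℕ, B ((n : ℤ) + 2) = lam * B ((n : ℤ) + 1) - B n := by
    intro n
    have := S.recB ((n : ℤ) + 1)
    rw [show (n : ℤ) + 1 + 1 = n + 2 by ring, show (n : ℤ) + 1 - 1 = n by ring] at this
    exact this
  have nn : ∀ n : ℕ, n ≤ h + 2 → 0 ≤ B n := by
    intro n hn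
    rcases Nat.eq_zero_or_pos n with h0 | h0
    · subst h0; simp [S.B0]
    · exact (S.pos n h0 hn).le
  have pos1 : ∀ n : ℕ, n ≤ h + 1 → 0 < B ((n : ℤ) + 1) := by
    intro n hn
    have := S.pos (n + 1) (by omega) (by omega)
    exact_mod_cast this
  obtain ⟨A, hA⟩ : ∃ A : ℕ → ℝ, ∀ m : ℕ, A m = B ((m : ℤ) + 1) - B m * ρ :=
    ⟨fun m => B ((m : ℤ) + 1) - B m * ρ, fun _ => rfl⟩
  obtain ⟨C, hC⟩ : ∃ C : ℕ → ℝ, ∀ m : ℕ, C m = B m * ρ - B ((m : ℤ) - 1) :=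
    ⟨fun m => B m * ρ - B ((m : ℤ) - 1), fun _ => rfl⟩
  obtain ⟨E, hE⟩ : ∃ E : ℕ → ℝ, ∀ m : ℕ, E m = B m + B ((m : ℤ) + 1) :=
    ⟨fun m => B m + B ((m : ℤ) + 1), fun _ => rfl⟩
  have hA1 : ∀ m : ℕ, A (m + 1) = B ((m : ℤ) + 2) - B ((m : ℤ) + 1) * ρ := by
    intro m; rw [hA]; push_cast; rw [show (m : ℤ) + 1 + 1 = m + 2 by ring]
  have hC1 : ∀ m : ℕ, C (m + 1) = B ((m : ℤ) + 1) * ρ - B m := by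
    intro m; rw [hC]; push_cast; rw [show (m : ℤ) + 1 - 1 = m by ring]
  have hE1 : ∀ m : ℕ, E (m + 1) = B ((m : ℤ) + 1) + B ((m : ℤ) + 2) := by
    intro m; rw [hE]; push_cast; rw [show (m : ℤ) + 1 + 1 = m + 2 by ring]
  have Arec : ∀ m, A (m + 2) = lam * A (m + 1) - A m := by
    intro m
    have := rec2 (m + 1)
    have h2 := rec2 m
    push_cast at this
    rw [hA1 m, hA1 (m + 1), hA m]; push_cast
    rw [this, show (m : ℤ) + 1 + 1 = m + 2 by ring]
    linear_combination (-ρ) * h2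
  have Crec : ∀ m, C (m + 2) = lam * C (m + 1) - C m := by
    intro m
    have h2 := rec2 m
    have h3 := S.recB m
    rw [hC1 m, hC1 (m + 1), hC m]; push_cast
    rw [show (m : ℤ) + 1 + 1 = m + 2 by ring]
    linear_combination ρ * h2 - h3
  have Erec : ∀ m, E (m + 2) = lam * E (m + 1) - E m := by
    intro m
    have := rec2 (m + 1)
    have h2 := rec2 m
    push_cast at this
    rw [hE1 m, hE1 (m + 1), hE m]; push_cast
    rw [this, show (m : ℤ) + 1 + 1 = m + 2 by ring]
    linear_combination h2
  have Apos : ∀ m ≤ h + 1, 0 < A m := by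
    intro m hm
    rw [hA]
    have h1 := S.mono m hm
    have h2 := pos1 m hm
    have h3 := nn m (by omega)
    nlinarith
  have Cpos : ∀ m ≤ h + 1, 0 < C m := by
    intro m hm
    rcases m with _ | m
    · rw [hC]; simp [S.B0, hBm]
    · rw [hC1]; exact S.Dpos ρ (by linarith) m (by omega)
  have Epos : ∀ m ≤ h + 1, 0 < E m := by
    intro m hm
    rw [hE]; linarith [nn m (by omega), pos1 m hm]
  have Aanti := seq_anti lam A h l2 Arec
    (by rw [show (1 : ℕ) = 0 + 1 from rfl, hA1, hA]; simp [S.B0, S.B1, hB2]; linarith) Apos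
  have Canti := seq_anti lam C h l2 Crec
    (by rw [show (1 : ℕ) = 0 + 1 from rfl, hC1, hC]; simp [S.B0, S.B1, hBm]; linarith) Cpos
  -- values
  have v1 : ∀ n m : ℕ, n + m = h → H (4 * n + 1) = A (m + 1) / A m := by
    intro n m hnm
    have := hH4h1 m (by omega)
    rw [show 4 * h + 1 - 4 * m = 4 * n + 1 by omega] at this
    rw [this, hA1, hA, ← neg_div_neg_eq]
    congr 1 <;> ring
  have v3 : ∀ n m : ℕ, n + m = h → H (4 * n + 3) = C (m + 1) / C m := by
    intro n m hnm
    have := hH4h3 m (by omega)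
    rw [show 4 * h + 3 - 4 * m = 4 * n + 3 by omega] at this
    rw [this, hC1, hC]
  have v2 : ∀ n : ℕ, n ≤ h → H (4 * n + 2) = E n / E (n + 1) := by
    intro n hn
    have := hH4m2 (n + 1) (by omega) (by omega)
    rw [show 4 * (n + 1) - 2 = 4 * n + 2 by omega] at this
    rw [this, hE1, hE]; push_cast
    rw [show (n : ℤ) + 1 + 1 = n + 2 by ring, show (n : ℤ) + 1 - 1 = n by ring]
  have v4 : ∀ n : ℕ, n < h → H (4 * n + 4) = B ((n : ℤ) + 1) / B ((n : ℤ) + 2) := by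
    intro n hn
    have := hH4 (n + 1) (by omega) (by omega)
    rw [show 4 * (n + 1) = 4 * n + 4 by omega] at this
    rw [this]; push_cast
    rw [show (n : ℤ) + 1 + 1 = n + 2 by ring]
  have dec : ∀ k, 1 ≤ k → ∃ n, k = 4 * n + 1 ∨ k = 4 * n + 2 ∨ k = 4 * n + 3 ∨ k = 4 * n + 4 := by
    intro k hk
    exact ⟨(k - 1) / 4, by omega⟩
  refine ⟨?_, ?_, ?_, ?_, ?_, ?_, ?_, ?_, ?_⟩
  · intro k hk hk2
    obtain ⟨n, rfl | rfl | rfl | rfl⟩ := dec k hk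
    · obtain ⟨m, hm⟩ : ∃ m, n + 1 + m = h := ⟨h - (n + 1), by omega⟩
      rw [show 4 * n + 1 + 4 = 4 * (n + 1) + 1 by ring, v1 (n + 1) m hm, v1 n (m + 1) (by omega)]
      exact ratio_rec _ _ _ _ (Apos _ (by omega)).ne' (Apos _ (by omega)).ne' (Arec m)
    · rw [show 4 * n + 2 + 4 = 4 * (n + 1) + 2 by ring, v2 (n + 1) (by omega), v2 n (by omega)]
      have p1 := Epos (n + 1) (by omega)
      have p2 : 0 < E (n + 2) := by
        rcases Nat.lt_or_ge (n + 1) h with hlt | hge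
        · exact Epos _ (by omega)
        · exact Epos _ (by omega)
      exact ratio_rec _ _ _ _ p1.ne' p2.ne' (by rw [Erec n]; ring)
    · obtain ⟨m, hm⟩ : ∃ m, n + 1 + m = h := ⟨h - (n + 1), by omega⟩
      rw [show 4 * n + 3 + 4 = 4 * (n + 1) + 3 by ring, v3 (n + 1) m hm, v3 n (m + 1) (by omega)]
      exact ratio_rec _ _ _ _ (Cpos _ (by omega)).ne' (Cpos _ (by omega)).ne' (Crec m)
    · rw [show 4 * n + 4 + 4 = 4 * (n + 1) + 4 by ring, v4 (n + 1) (by omega), v4 n (by omega)]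
      have p1 := pos1 (n + 1) (by omega)
      have p2 := pos1 (n + 2) (by omega)
      have e := rec2 (n + 1)
      push_cast at p1 p2 e ⊢
      rw [show (n : ℤ) + 1 + 1 = n + 2 by ring] at *
      rw [show (n : ℤ) + 1 + 2 = n + 2 + 1 by ring] at *
      exact ratio_rec _ _ _ _ p1.ne' p2.ne' (by rw [e]; ring)
  · intro k hk hk2
    obtain ⟨n, rfl | rfl | rfl | rfl⟩ := dec k hk
    · obtain ⟨m, hm⟩ : ∃ m, n + m = h := ⟨h - n, by omega⟩
      rw [v1 n m hm]
      have p1 := Apos m (by omega)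
      exact ⟨div_pos (Apos _ (by omega)) p1, (div_le_one p1).2 (Aanti m (by omega))⟩
    · rw [v2 n (by omega)]
      have p1 := Epos n (by omega)
      have p2 := Epos (n + 1) (by omega)
      refine ⟨div_pos p1 p2, (div_le_one p2).2 ?_⟩
      rw [hE1, hE]
      have := S.mono n (by omega)
      have h2 := S.mono (n + 1) (by omega)
      push_cast at h2
      rw [show (n : ℤ) + 1 + 1 = n + 2 by ring] at h2
      linarith
    · obtain ⟨m, hm⟩ : ∃ m, n + m = h := ⟨h - n, by omega⟩
      rw [v3 n m hm]
      have p1 := Cpos m (by omega)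
      exact ⟨div_pos (Cpos _ (by omega)) p1, (div_le_one p1).2 (Canti m (by omega))⟩
    · rw [v4 n (by omega)]
      have p1 := pos1 n (by omega)
      have p2 := pos1 (n + 1) (by omega)
      have h2 := S.mono (n + 1) (by omega)
      push_cast at h2 p2
      rw [show (n : ℤ) + 1 + 1 = n + 2 by ring] at h2 p2
      exact ⟨div_pos p1 p2, (div_le_one p2).2 h2⟩
  · have := v1 0 h (by omega)
    have i3 : 0 < 1 - (lam - 1) * ρ := by nlinarith
    rw [hA1, hA, S.eq, S.Bh] at this
    norm_num at this
    rw [this, show B ((h : ℤ) + 1) - B ((h : ℤ) + 1) * ρ = B ((h : ℤ) + 1) * (1 - ρ) by ring,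
      show B ((h : ℤ) + 1) - (lam - 1) * B ((h : ℤ) + 1) * ρ
        = B ((h : ℤ) + 1) * (1 - (lam - 1) * ρ) by ring, mul_div_mul_left _ _ bp.ne']
  · have := v2 0 (by omega)
    rw [hE1, hE] at this
    norm_num [S.B0, S.B1, hB2] at this
    rw [this, one_div]
  · have := v3 0 h (by omega)
    have cp := Cpos h (by omega)
    rw [hC, S.Bh, S.Bh1] at cp
    rw [hC1, hC, S.Bh, S.Bh1] at this
    norm_num at this
    rw [this, div_eq_div_iff cp.ne' (by linarith)]
    linear_combination B ((h : ℤ) + 1) * rho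
  · have := v4 0 (by omega)
    norm_num [S.B1, hB2] at this
    rw [this, one_div]
  · have := v1 h 0 (by omega)
    rw [hA1, hA] at this
    norm_num [S.B0, S.B1, hB2] at this
    exact this
  · have := v2 h (by omega)
    rw [hE1, hE, S.eq, S.Bh] at this
    rw [this, div_eq_div_iff (by linarith) (by norm_num)]
    ring
  · have := v3 h 0 (by omega)
    rw [hC1, hC] at this
    norm_num [S.B0, S.B1, hBm] at this
    exact this

end

lemma setup_of (h q : ℕ) (hh : 1 ≤ h) (hq : q = 2 * h + 3) (lam α ρ : ℝ)
    (hlam : lam = 2 * Real.cos (Real.pi / q))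
    (hρ : ρ = (lam - 2 + Real.sqrt (lam ^ 2 - 4 * lam + 8)) / 2)
    (hα1 : 1 / 2 ≤ α) (hα2 : α < ρ / lam)
    (B : ℤ → ℝ)
    (hB : ∀ n : ℤ, B n = Real.sin (n * Real.pi / q) / Real.sin (Real.pi / q)) :
    Setup h lam ρ (α * lam) B ∧
      B ((h : ℤ) + 1) = 1 / (2 * Real.sin (Real.pi / (2 * q))) ∧
      Real.sqrt (2 - lam) = 2 * Real.sin (Real.pi / (2 * q)) ∧
      0 < Real.sin (Real.pi / (2 * q)) := by
  have hpi := Real.pi_pos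
  have hqR : (q : ℝ) = 2 * h + 3 := by rw [hq]; push_cast; ring
  have hhR : (1 : ℝ) ≤ h := by exact_mod_cast hh
  have hq0 : (0 : ℝ) < q := by linarith
  obtain ⟨t, ht⟩ : ∃ t, t = Real.pi / q := ⟨_, rfl⟩
  have htq : t * (2 * h + 3) = Real.pi := by rw [ht, ← hqR]; field_simp
  have ht0 : 0 < t := by rw [ht]; positivity
  have ht3 : t < Real.pi / 3 := by nlinarith
  have htt : Real.pi / (2 * q) = t / 2 := by rw [ht]; field_simp
  have hBt : ∀ n : ℤ, B n = Real.sin (n * t) / Real.sin t := by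
    intro n; rw [hB, ht, mul_div_assoc]
  rw [← ht] at hlam
  rw [htt]
  have hs : 0 < Real.sin t := Real.sin_pos_of_pos_of_lt_pi ht0 (by linarith)
  have hs2 : 0 < Real.sin (t / 2) := Real.sin_pos_of_pos_of_lt_pi (by linarith) (by linarith)
  have hc2 : 0 < Real.cos (t / 2) := Real.cos_pos_of_mem_Ioo ⟨by linarith, by linarith⟩
  have l1 : 1 < lam := by
    have := Real.cos_lt_cos_of_nonneg_of_le_pi ht0.le (by linarith) ht3
    rw [Real.cos_pi_div_three] at this
    linarith
  have hsq : 2 - lam = (2 * Real.sin (t / 2)) ^ 2 := by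
    have := Real.cos_sq' (t / 2)
    have h2 := Real.cos_sq (t / 2)
    rw [show 2 * (t / 2) = t by ring] at h2
    rw [hlam]; nlinarith
  have l2 : lam < 2 := by
    have : 0 < (2 * Real.sin (t / 2)) ^ 2 := by positivity
    linarith
  have hss : Real.sqrt (lam ^ 2 - 4 * lam + 8) ^ 2 = lam ^ 2 - 4 * lam + 8 :=
    Real.sq_sqrt (by nlinarith [sq_nonneg (lam - 2)])
  have hs0 := Real.sqrt_nonneg (lam ^ 2 - 4 * lam + 8)
  have hw2 : α * lam < ρ := by rwa [lt_div_iff₀ (by linarith)] at hα2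
  have hw1 : lam / 2 ≤ α * lam := by nlinarith
  have hw : ∀ x : ℤ, ∀ y : ℝ, (x : ℝ) = y → B x = Real.sin (y * t) / Real.sin t := by
    intro x y e; rw [hBt, e]
  refine ⟨⟨hh, l1, l2, ?_, by linarith, ?_, hw1, hw2, ?_, ?_, ?_, ?_, ?_, ?_⟩, ?_, ?_, hs2⟩
  · rw [hρ]; nlinarith
  · rw [hρ]
    have : Real.sqrt (lam ^ 2 - 4 * lam + 8) < 4 - lam := by nlinarith
    linarith
  · rw [hBt]; simp
  · rw [hBt]; simp [hs.ne']
  · intro n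
    rw [hBt, hBt, hBt, hlam]
    push_cast
    rw [show ((n : ℝ) + 1) * t = n * t + t by ring, show ((n : ℝ) - 1) * t = n * t - t by ring,
      Real.sin_add, Real.sin_sub]
    field_simp; ring
  · intro n hn hn2
    rw [hBt]
    have h1 : (1 : ℝ) ≤ n := by exact_mod_cast hn
    have h2 : (n : ℝ) ≤ h + 2 := by exact_mod_cast hn2
    apply div_pos _ hs
    apply Real.sin_pos_of_pos_of_lt_pi
    · push_cast; exact mul_pos (by linarith) ht0
    · have h3 := mul_le_mul_of_nonneg_right h2 ht0.le
      have h4 := mul_le_mul_of_nonneg_right hhR ht0.le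
      push_cast; linarith
  · intro n hn
    rw [hBt, hBt]
    apply div_le_div_of_nonneg_right _ hs.le
    push_cast
    have h0 : (0 : ℝ) ≤ n := by positivity
    have h2 : (n : ℝ) ≤ h + 1 := by exact_mod_cast hn
    have e : Real.sin (((n : ℝ) + 1) * t) - Real.sin (n * t)
        = 2 * Real.sin (t / 2) * Real.cos ((n + 1 / 2) * t) := by
      rw [Real.sin_sub_sin]
      congr 2 <;> [skip; skip]
      · ring_nf
      · ring_nf
    have hc : 0 ≤ Real.cos (((n : ℝ) + 1 / 2) * t) := by
      have h3 := mul_le_mul_of_nonneg_right h2 ht0.le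
      have h4 := mul_nonneg h0 ht0.le
      apply Real.cos_nonneg_of_neg_pi_div_two_le_of_le
      · linarith
      · linarith
    have := mul_nonneg hs2.le hc
    linarith
  · rw [hBt, hBt]
    congr 1
    push_cast
    rw [← Real.sin_pi_sub]
    congr 1
    linarith
  · rw [hBt]
    push_cast
    rw [show ((h : ℝ) + 1) * t = Real.pi / 2 - t / 2 by linarith, Real.sin_pi_div_two_sub]
    have : Real.sin t = 2 * Real.sin (t / 2) * Real.cos (t / 2) := by
      rw [← Real.sin_two_mul]; congr 1; ring
    rw [this]; field_simp
  · rw [hsq, Real.sqrt_sq (by positivity)]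

/-- Proposition 2.13: for odd `q = 2h+3` and `1/2 ≤ α < ρ/λ`, the integral of `(1+xy)⁻²`
over `Ω_α` equals `log((1+ρ)/√(2-λ)) = log((1+ρ)/(2 sin(π/(2q))))`, independent of `α`. -/
theorem stmt15 (h q : ℕ) (hh : 1 ≤ h) (hq : q = 2 * h + 3) (lam α ρ : ℝ)
    (hlam : lam = 2 * Real.cos (Real.pi / q))
    (hρ : ρ = (lam - 2 + Real.sqrt (lam ^ 2 - 4 * lam + 8)) / 2)
    (hα1 : 1 / 2 ≤ α) (hα2 : α < ρ / lam)
    (B : ℤ → ℝ)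
    (hB : ∀ n : ℤ, B n = Real.sin (n * Real.pi / q) / Real.sin (Real.pi / q))
    (ℓ r : ℕ → ℝ)
    (hℓ : ∀ n, ℓ n = (Tmap lam α)^[n] ((α - 1) * lam))
    (hr : ∀ n, r n = (Tmap lam α)^[n] (α * lam))
    (H : ℕ → ℝ)
    (hH4 : ∀ n : ℕ, 1 ≤ n → n ≤ h → H (4 * n) = B n / B ((n : ℤ) + 1))
    (hH4m2 : ∀ n : ℕ, 1 ≤ n → n ≤ h + 1 →
      H (4 * n - 2) = (B ((n : ℤ) - 1) + B n) / (B n + B ((n : ℤ) + 1)))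
    (hH4h3 : ∀ n : ℕ, n ≤ h →
      H (4 * h + 3 - 4 * n) = (B ((n : ℤ) + 1) * ρ - B n) / (B n * ρ - B ((n : ℤ) - 1)))
    (hH4h1 : ∀ n : ℕ, n ≤ h →
      H (4 * h + 1 - 4 * n) = (B ((n : ℤ) + 1) * ρ - B ((n : ℤ) + 2)) / (B n * ρ - B ((n : ℤ) + 1)))
    (Ω : Set (ℝ × ℝ))
    (hΩ : Ω = (⋃ n ∈ Finset.Icc 1 h, Ico (ℓ (n - 1)) (r (h + n)) ×ˢ Icc (0 : ℝ) (H (4 * n - 3)))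
      ∪ (⋃ n ∈ Finset.Icc 1 h, Ico (r (h + n)) (ℓ (h + n)) ×ˢ Icc (0 : ℝ) (H (4 * n - 2)))
      ∪ (⋃ n ∈ Finset.Icc 1 h, Ico (ℓ (h + n)) (r n) ×ˢ Icc (0 : ℝ) (H (4 * n - 1)))
      ∪ (⋃ n ∈ Finset.Icc 1 h, Ico (r n) (ℓ n) ×ˢ Icc (0 : ℝ) (H (4 * n)))
      ∪ Ico (ℓ h) (r (2 * h + 1)) ×ˢ Icc (0 : ℝ) (H (4 * h + 1))
      ∪ Ico (r (2 * h + 1)) (ℓ (2 * h + 1)) ×ˢ Icc (0 : ℝ) (H (4 * h + 2))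
      ∪ Ico (ℓ (2 * h + 1)) (r 0) ×ˢ Icc (0 : ℝ) (H (4 * h + 3))) :
    (∫ z in Ω, 1 / (1 + z.1 * z.2) ^ 2 = Real.log ((1 + ρ) / Real.sqrt (2 - lam))) ∧
    (∫ z in Ω, 1 / (1 + z.1 * z.2) ^ 2
        = Real.log ((1 + ρ) / (2 * Real.sin (Real.pi / (2 * q))))) := by
  obtain ⟨S, hBh, hsqrt, hsin⟩ := setup_of h q hh hq lam α ρ hlam hρ hα1 hα2 B hB
  have F := HF_of S hH4 hH4m2 hH4h3 hH4h1
  obtain ⟨w, hw⟩ : ∃ w, w = α * lam := ⟨_, rfl⟩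
  rw [← hw] at S
  obtain ⟨cl, hcl⟩ : ∃ cl : ℕ → ℝ, ∀ n, cl n = (Mm lam)^[n] (w - lam) := ⟨_, fun _ => rfl⟩
  obtain ⟨cr, hcr⟩ : ∃ cr : ℕ → ℝ, ∀ n, cr n = (Mm lam)^[n] (-w) := ⟨_, fun _ => rfl⟩
  obtain ⟨pl, hpl⟩ : ∃ pl : ℕ → ℝ, ∀ n, pl n = (Mm lam)^[n] (-1 / cl h - 2 * lam) :=
    ⟨_, fun _ => rfl⟩
  obtain ⟨pr, hpr⟩ : ∃ pr : ℕ → ℝ, ∀ n, pr n = (Mm lam)^[n] (-1 / cr h - 2 * lam) :=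
    ⟨_, fun _ => rfl⟩
  have Q : Seqs h lam w cl cr pl pr := by
    refine ⟨by simp [hcl], by simp [hcr], by simp [hpl], by simp [hpr], ?_, ?_, ?_, ?_⟩
    · intro n; rw [hcl, hcl, Function.iterate_succ_apply']
    · intro n; rw [hcr, hcr, Function.iterate_succ_apply']
    · intro n; rw [hpl, hpl, Function.iterate_succ_apply']
    · intro n; rw [hpr, hpr, Function.iterate_succ_apply']
  have C := chain_of S Q
  have l1 := S.l1
  have l2 := S.l2
  have w1 := S.w1
  have w2 := S.w2
  have r1 := S.r1
  have lpos : 0 < lam := by linarith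
  have wpos : 0 < w := by linarith
  have hl0 : (α - 1) * lam = w - lam := by rw [hw]; ring
  -- lower bounds
  have lb : ∀ n ≤ h, w - lam ≤ cl n := by
    intro n
    induction n with
    | zero => intro _; rw [Q.cl0]
    | succ n ih =>
      intro hn
      obtain ⟨a, b, c⟩ := C.chain n (by omega)
      linarith [ih (by omega), C.le (n + 1) hn]
  have clle : ∀ n ≤ h, cl n ≤ pr n ∧ pr n ≤ pl n ∧ pl n < w := by
    intro n hn
    rcases hn.lt_or_eq with hlt | heq
    · obtain ⟨a, b, c⟩ := C.chain n hlt
      exact ⟨a, b, by linarith [C.crneg (n + 1) (by omega)]⟩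
    · subst heq; exact ⟨C.last1, C.last2, C.last3⟩
  have Tn : ∀ x y : ℝ, ∀ d : ℤ, x < 0 → y = -1 / x - lam * d → w - lam ≤ y → y < w →
      Tmap lam α x = y := by
    intro x y d hx hy h1 h2
    exact Tneg lam α x y d lpos hx hy (by rw [hl0]; exact h1) (by rw [← hw]; exact h2)
  have hMm : ∀ x, Mm lam x = -1 / x - lam * ((1 : ℤ) : ℝ) := by
    intro x; unfold Mm; push_cast; ring
  have ℓs : ∀ n, ℓ (n + 1) = Tmap lam α (ℓ n) := by
    intro n; rw [hℓ, hℓ, Function.iterate_succ_apply']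
  have rs : ∀ n, r (n + 1) = Tmap lam α (r n) := by
    intro n; rw [hr, hr, Function.iterate_succ_apply']
  have r0 : r 0 = w := by rw [hr, hw]; rfl
  have vl : ∀ n ≤ h, ℓ n = cl n := by
    intro n
    induction n with
    | zero => intro _; rw [Q.cl0, hℓ, ← hl0]; rfl
    | succ n ih =>
      intro hn
      rw [ℓs, ih (by omega)]
      exact Tn _ _ 1 (C.clneg n (by omega)) (by rw [Q.cls, hMm]) (lb _ hn)
        (by linarith [C.clneg (n + 1) hn])
  have vr : ∀ n < h, r (n + 1) = cr (n + 1) := by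
    intro n
    induction n with
    | zero =>
      intro h0
      rw [rs, r0]
      apply Tstep lam α w _ 1 lpos wpos.ne'
      · rw [Q.crs, Q.cr0, abs_of_pos (by positivity)]
        unfold Mm
        rw [neg_div_neg_eq]; push_cast; ring
      · rw [hl0]
        obtain ⟨a, b, c⟩ := C.chain 0 h0
        linarith [lb 0 (by omega)]
      · rw [← hw]
        linarith [C.crneg (0 + 1) (by omega)]
    | succ n ih =>
      intro hn
      rw [rs, ih (by omega)]
      obtain ⟨a, b, c⟩ := C.chain (n + 1) hn
      exact Tn _ _ 1 (C.crneg (n + 1) (by omega)) (by rw [Q.crs (n + 1), hMm])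
        (by linarith [lb (n + 1) (by omega)]) (by linarith [C.crneg (n + 1 + 1) (by omega)])
  have vpl : ∀ n ≤ h, ℓ (h + 1 + n) = pl n := by
    intro n
    induction n with
    | zero =>
      intro _
      rw [add_zero, ℓs, vl h le_rfl]
      obtain ⟨a, b, c⟩ := clle 0 (by omega)
      exact Tn _ _ 2 (C.clneg h le_rfl) (by rw [Q.pl0]; push_cast; ring)
        (by linarith [lb 0 (by omega)]) c
    | succ n ih =>
      intro hn
      rw [← add_assoc, ℓs, ih (by omega)]
      obtain ⟨a, b, c⟩ := clle (n + 1) hn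
      obtain ⟨a', b', c'⟩ := C.chain n (by omega)
      exact Tn _ _ 1 (by linarith [C.crneg (n + 1) hn]) (by rw [Q.pls, hMm])
        (by linarith [lb (n + 1) hn]) c
  have vpr : ∀ n ≤ h, r (h + 1 + n) = pr n := by
    intro n
    induction n with
    | zero =>
      intro _
      have : r h = cr h := by
        obtain ⟨k, rfl⟩ : ∃ k, h = k + 1 := ⟨h - 1, by omega⟩
        exact vr k (by omega)
      rw [add_zero, rs, this]
      obtain ⟨a, b, c⟩ := clle 0 (by omega)
      exact Tn _ _ 2 (C.crneg h le_rfl) (by rw [Q.pr0]; push_cast; ring)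
        (by linarith [lb 0 (by omega)]) (by linarith)
    | succ n ih =>
      intro hn
      rw [← add_assoc, rs, ih (by omega)]
      obtain ⟨a, b, c⟩ := clle (n + 1) hn
      obtain ⟨a', b', c'⟩ := C.chain n (by omega)
      exact Tn _ _ 1 (by linarith [C.crneg (n + 1) hn]) (by rw [Q.prs, hMm])
        (by linarith [lb (n + 1) hn]) (by linarith)
  -- the breakpoints
  obtain ⟨c, hc⟩ : ∃ c : ℕ → ℝ, ∀ k, c k = if k % 4 = 0 then cl (k / 4) else
      if k % 4 = 1 then pr (k / 4) else if k % 4 = 2 then pl (k / 4) else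
      if k / 4 < h then cr (k / 4 + 1) else w := ⟨_, fun _ => rfl⟩
  have c0 : ∀ n ≤ h, c (4 * n) = cl n := by
    intro n _
    rw [hc, if_pos (by omega), show 4 * n / 4 = n by omega]
  have c1 : ∀ n ≤ h, c (4 * n + 1) = pr n := by
    intro n _
    rw [hc, if_neg (by omega), if_pos (by omega), show (4 * n + 1) / 4 = n by omega]
  have c2 : ∀ n ≤ h, c (4 * n + 2) = pl n := by
    intro n _
    rw [hc, if_neg (by omega), if_neg (by omega), if_pos (by omega),
      show (4 * n + 2) / 4 = n by omega]
  have c3 : ∀ n < h, c (4 * n + 3) = cr (n + 1) := by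
    intro n _
    rw [hc, if_neg (by omega), if_neg (by omega), if_neg (by omega), if_pos (by omega),
      show (4 * n + 3) / 4 = n by omega]
  have c4 : c (4 * h + 3) = w := by
    rw [hc, if_neg (by omega), if_neg (by omega), if_neg (by omega), if_neg (by omega)]
  have dec : ∀ k, k < 4 * h + 3 → (∃ n < h, k = 4 * n ∨ k = 4 * n + 1 ∨ k = 4 * n + 2 ∨
      k = 4 * n + 3) ∨ k = 4 * h ∨ k = 4 * h + 1 ∨ k = 4 * h + 2 := by
    intro k hk
    rcases Nat.lt_or_ge (k / 4) h with hlt | hge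
    · left; exact ⟨k / 4, hlt, by omega⟩
    · right; omega
  have c0' : ∀ n < h, c (4 * n + 3 + 1) = cl (n + 1) := by
    intro n hn; rw [show 4 * n + 3 + 1 = 4 * (n + 1) by ring, c0 _ (by omega)]
  have hmono : ∀ k < 4 * h + 3, c k ≤ c (k + 1) := by
    intro k hk
    rcases dec k hk with ⟨n, hn, rfl | rfl | rfl | rfl⟩ | rfl | rfl | rfl
    · rw [c0 n hn.le, c1 n hn.le]; exact (clle n hn.le).1
    · rw [c1 n hn.le, c2 n hn.le]; exact (clle n hn.le).2.1
    · rw [c2 n hn.le, c3 n hn]; exact (C.chain n hn).2.2.le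
    · rw [c3 n hn, c0' n hn]; exact C.le (n + 1) (by omega)
    · rw [c0 h le_rfl, c1 h le_rfl]; exact (clle h le_rfl).1
    · rw [c1 h le_rfl, c2 h le_rfl]; exact (clle h le_rfl).2.1
    · rw [c2 h le_rfl, c4]; exact (clle h le_rfl).2.2.le
  have hc00 : -1 < c 0 := by
    have := c0 0 (by omega)
    rw [mul_zero] at this
    rw [this, Q.cl0]; linarith
  have hHb : ∀ k < 4 * h + 3, 0 ≤ H (k + 1) ∧ H (k + 1) ≤ 1 := by
    intro k hk
    obtain ⟨a, b⟩ := F.bd (k + 1) (by omega) (by omega)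
    exact ⟨a.le, b⟩
  have hlow : ∀ k ≤ 4 * h + 3, -1 < c k := by
    intro k hk
    have := (union_int c H hc00 k (fun j hj => hmono j (by omega))
      (fun j hj => hHb j (by omega))).1
    linarith
  have hΩ' : Ω = ⋃ k ∈ Finset.range (4 * h + 3),
      Ico (c k) (c (k+1)) ×ˢ Icc (0:ℝ) (H (k+1)) := by
    have b1 : ∀ n < h, ℓ n = c (4 * n) := fun n hn => by rw [vl n hn.le, c0 n hn.le]
    have b2 : ∀ n < h, r (h + (n + 1)) = c (4 * n + 1) := fun n hn => by
      rw [show h + (n + 1) = h + 1 + n by ring, vpr n hn.le, c1 n hn.le]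
    have b3 : ∀ n < h, ℓ (h + (n + 1)) = c (4 * n + 2) := fun n hn => by
      rw [show h + (n + 1) = h + 1 + n by ring, vpl n hn.le, c2 n hn.le]
    have b4 : ∀ n < h, r (n + 1) = c (4 * n + 3) := fun n hn => by rw [vr n hn, c3 n hn]
    have b5 : ∀ n < h, ℓ (n + 1) = c (4 * n + 4) := fun n hn => by
      rw [vl (n + 1) (by omega), c0' n hn]
    have b6 : ℓ h = c (4 * h) := by rw [vl h le_rfl, c0 h le_rfl]
    have b7 : r (2 * h + 1) = c (4 * h + 1) := by
      rw [show 2 * h + 1 = h + 1 + h by ring, vpr h le_rfl, c1 h le_rfl]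
    have b8 : ℓ (2 * h + 1) = c (4 * h + 2) := by
      rw [show 2 * h + 1 = h + 1 + h by ring, vpl h le_rfl, c2 h le_rfl]
    have b9 : r 0 = c (4 * h + 3) := by rw [r0, c4]
    rw [hΩ, b6, b7, b8, b9]
    ext z
    simp only [mem_union, mem_iUnion, Finset.mem_Icc, Finset.mem_range, exists_prop]
    constructor
    · rintro ((((((⟨n, hn, hz⟩ | ⟨n, hn, hz⟩) | ⟨n, hn, hz⟩) | ⟨n, hn, hz⟩) | hz) | hz) | hz)
      · obtain ⟨m, rfl⟩ : ∃ m, n = m + 1 := ⟨n - 1, by omega⟩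
        rw [Nat.add_sub_cancel, b1 m (by omega), b2 m (by omega),
          show 4 * (m + 1) - 3 = 4 * m + 1 by omega] at hz
        exact ⟨4 * m, by omega, hz⟩
      · obtain ⟨m, rfl⟩ : ∃ m, n = m + 1 := ⟨n - 1, by omega⟩
        rw [b3 m (by omega), b2 m (by omega), show 4 * (m + 1) - 2 = 4 * m + 2 by omega] at hz
        exact ⟨4 * m + 1, by omega, hz⟩
      · obtain ⟨m, rfl⟩ : ∃ m, n = m + 1 := ⟨n - 1, by omega⟩
        rw [b3 m (by omega), b4 m (by omega), show 4 * (m + 1) - 1 = 4 * m + 3 by omega] at hz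
        exact ⟨4 * m + 2, by omega, hz⟩
      · obtain ⟨m, rfl⟩ : ∃ m, n = m + 1 := ⟨n - 1, by omega⟩
        rw [b5 m (by omega), b4 m (by omega), show 4 * (m + 1) = 4 * m + 4 by omega] at hz
        exact ⟨4 * m + 3, by omega, hz⟩
      · exact ⟨4 * h, by omega, hz⟩
      · exact ⟨4 * h + 1, by omega, hz⟩
      · exact ⟨4 * h + 2, by omega, hz⟩
    · rintro ⟨k, hk, hz⟩
      rcases dec k hk with ⟨m, hm, rfl | rfl | rfl | rfl⟩ | rfl | rfl | rfl
      · refine Or.inl (Or.inl (Or.inl (Or.inl (Or.inl (Or.inl ⟨m + 1, by omega, ?_⟩)))))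
        rw [Nat.add_sub_cancel, b1 m hm, b2 m hm, show 4 * (m + 1) - 3 = 4 * m + 1 by omega]
        exact hz
      · refine Or.inl (Or.inl (Or.inl (Or.inl (Or.inl (Or.inr ⟨m + 1, by omega, ?_⟩)))))
        rw [b3 m hm, b2 m hm, show 4 * (m + 1) - 2 = 4 * m + 2 by omega]
        exact hz
      · refine Or.inl (Or.inl (Or.inl (Or.inl (Or.inr ⟨m + 1, by omega, ?_⟩))))
        rw [b3 m hm, b4 m hm, show 4 * (m + 1) - 1 = 4 * m + 3 by omega]
        exact hz
      · refine Or.inl (Or.inl (Or.inl (Or.inr ⟨m + 1, by omega, ?_⟩)))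
        rw [b5 m hm, b4 m hm, show 4 * (m + 1) = 4 * m + 4 by omega]
        exact hz
      · exact Or.inl (Or.inl (Or.inr hz))
      · exact Or.inl (Or.inr hz)
      · exact Or.inr hz
  have hint := (union_int c H hc00 (4 * h + 3) hmono hHb).2.2.2.2
  rw [sumlog S Q C F c c0 c1 c2 c3 c4 hlow, ← hΩ'] at hint
  have hval : ρ / ((1 - ρ) * B ((h : ℤ) + 1))
      = (1 + ρ) / (2 * Real.sin (Real.pi / (2 * q))) := by
    have hs : 2 - lam = (2 * Real.sin (Real.pi / (2 * q))) ^ 2 := by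
      rw [← hsqrt, Real.sq_sqrt (by linarith)]
    have hr1 : 0 < 1 - ρ := by linarith
    have rho := S.rho
    rw [hBh]
    generalize Real.sin (Real.pi / (2 * q)) = s at *
    have e : (1 - ρ) * (1 / (2 * s)) = (1 - ρ) / (2 * s) := by ring
    rw [e, div_div_eq_mul_div, div_eq_div_iff hr1.ne' (by positivity)]
    linear_combination rho - ρ * hs
  rw [hval] at hint
  exact ⟨by rw [hint, hsqrt], hint⟩
end

section
/- Let q = 2h+3 with h ≥ 1, λ = 2cos(π/q), ρ = (λ − 2 + √(λ² − 4λ + 8))/2, α = ρ/λ, and B_n = sin(nπ/q)/sin(π/q). Let Ω_ρ = ⋃_{j=1}^{h} ( [ℓ_{j−1}, r_j) × [0, (B_{j−1}+B_j)/(B_j+B_{j+1})] ∪ [r_j, ℓ_j) × [0, B_j/B_{j+1}] ) ∪ [ℓ_h, ρ) × [0, λ/2]. Then the map 𝒯_ρ(x,y) = (T_{ρ/λ}(x), 1/(d(x)λ + ε(x)y)) maps Ω_ρ to Ω_ρ and is bijective off of a set of two-dimensional Lebesgue measure zero. -/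
open Set MeasureTheory

lemma aux_dfun {lam α ρ x : ℝ} (hl : 0 < lam) (hα : α = ρ / lam) (d : ℤ)
    (h1 : ρ - lam ≤ |1 / x| - lam * d) (h2 : |1 / x| - lam * d < ρ) : dfun lam α x = d := by
  have e : |1 / (x * lam)| = |1 / x| / lam := by
    rw [abs_div, abs_div, abs_mul, abs_of_pos hl, div_div]
  unfold dfun
  rw [Int.floor_eq_iff, e, hα]
  have e2 : |1 / x| / lam + 1 - ρ / lam = (|1 / x| + lam - ρ) / lam := by field_simp
  rw [e2, le_div_iff₀ hl, div_lt_iff₀ hl]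
  constructor <;> nlinarith

lemma aux_T {lam α ρ x : ℝ} (hl : 0 < lam) (hα : α = ρ / lam) (hx : x ≠ 0) (d : ℤ)
    (h1 : ρ - lam ≤ |1 / x| - lam * d) (h2 : |1 / x| - lam * d < ρ) :
    Tmap lam α x = |1 / x| - lam * d := by
  unfold Tmap
  rw [if_neg hx, aux_dfun hl hα d h1 h2]

lemma aux_T_range {lam α ρ x : ℝ} (hl : 0 < lam) (hα : α = ρ / lam) (hx : x ≠ 0) :
    Tmap lam α x = |1 / x| - lam * dfun lam α x ∧
    ρ - lam ≤ |1 / x| - lam * dfun lam α x ∧ |1 / x| - lam * dfun lam α x < ρ := by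
  have e : |1 / (x * lam)| = |1 / x| / lam := by
    rw [abs_div, abs_div, abs_mul, abs_of_pos hl, div_div]
  have h1 := Int.floor_le (|1 / (x * lam)| + 1 - α)
  have h2 := Int.lt_floor_add_one (|1 / (x * lam)| + 1 - α)
  have h3 : dfun lam α x = ⌊|1 / (x * lam)| + 1 - α⌋ := rfl
  rw [← h3] at h1 h2
  have e2 : |1 / x| / lam + 1 - ρ / lam = (|1 / x| + lam - ρ) / lam := by field_simp
  rw [e, hα, e2] at h1 h2
  rw [← hα] at h1 h2
  rw [le_div_iff₀ hl] at h1
  rw [div_lt_iff₀ hl] at h2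
  refine ⟨by unfold Tmap; rw [if_neg hx], ?_, ?_⟩ <;> nlinarith

/-- locating a point in a finite monotone partition -/
lemma aux_locate (p : ℕ → ℝ) (x : ℝ) (a : ℕ) : ∀ n, a < n → p a ≤ x → x < p n →
    ∃ k, a ≤ k ∧ k < n ∧ p k ≤ x ∧ x < p (k + 1) := by
  intro n
  induction n with
  | zero => intro h; omega
  | succ n ih =>
    intro h h1 h2
    by_cases hc : p n ≤ x
    · exact ⟨n, by omega, by omega, hc, h2⟩
    · push Not at hc
      have : a ≠ n := by rintro rfl; linarith
      obtain ⟨k, h3, h4, h5⟩ := ih (by omega) h1 hc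
      exact ⟨k, h3, by omega, h5⟩

lemma aux_mono (p : ℕ → ℝ) (n : ℕ) (hp : ∀ k < n, p k < p (k + 1)) :
    ∀ i j, i ≤ j → j ≤ n → p i ≤ p j := by
  intro i j hij
  induction hij with
  | refl => intro _; exact le_rfl
  | step h ih => intro hj; exact (ih (by omega)).trans (hp _ (by omega)).le

section core

variable {h : ℕ} {lam α ρ : ℝ} {p H : ℕ → ℝ} {Ω : Set (ℝ × ℝ)}

/-- All the structural facts. -/
structure Core (h : ℕ) (lam α ρ : ℝ) (p H : ℕ → ℝ) (Ω : Set (ℝ × ℝ)) : Prop where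
  hh : 1 ≤ h
  l1 : 1 < lam
  l2 : lam < 2
  r0 : 0 < ρ
  r1 : ρ < 1
  hq : ρ ^ 2 + (2 - lam) * ρ = 1
  hα : α = ρ / lam
  hp : ∀ k < 2 * h + 1, p k < p (k + 1)
  p0 : p 0 = ρ - lam
  p1 : p 1 = 1 / ρ - lam
  pa : p (2 * h - 1) = -1 / (lam + ρ)
  pb : p (2 * h) = -1 / (2 + ρ)
  pc : p (2 * h + 1) = ρ
  ps : ∀ k ≤ 2 * h - 1, p k * (p (k + 2) + lam) = -1
  H1 : H 1 = 1 / (1 + lam)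
  H2 : H 2 = 1 / lam
  Hb : H (2 * h) = lam - 1
  Hc : H (2 * h + 1) = lam / 2
  hH : ∀ k < 2 * h + 1, H k < H (k + 1)
  H0 : H 0 = 0
  Hs : ∀ k ≤ 2 * h - 1, H (k + 2) * (lam - H k) = 1
  mem : ∀ z : ℝ × ℝ, z ∈ Ω ↔ ∃ k ≤ 2 * h, p k ≤ z.1 ∧ z.1 < p (k + 1) ∧ 0 ≤ z.2 ∧ z.2 ≤ H (k + 1)

lemma Core.bounds (C : Core h lam α ρ p H Ω) {z : ℝ × ℝ} (hz : z ∈ Ω) :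
    ρ - lam ≤ z.1 ∧ z.1 < ρ ∧ 0 ≤ z.2 ∧ z.2 ≤ lam / 2 := by
  obtain ⟨k, hk, h1, h2, h3, h4⟩ := (C.mem z).1 hz
  have a := aux_mono p _ C.hp 0 k (by omega) (by omega)
  have b := aux_mono p _ C.hp (k + 1) (2 * h + 1) (by omega) (by omega)
  have c := aux_mono H _ C.hH (k + 1) (2 * h + 1) (by omega) (by omega)
  rw [C.p0] at a
  rw [C.pc] at b
  rw [C.Hc] at c
  exact ⟨by linarith, by linarith, h3, by linarith⟩

lemma Core.memA (C : Core h lam α ρ p H Ω) {x y : ℝ} (a : ℕ) (ha : a ≤ 2 * h)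
    (h1 : p a ≤ x) (h2 : x < ρ) (h3 : 0 ≤ y) (h4 : y ≤ H (a + 1)) : (x, y) ∈ Ω := by
  obtain ⟨k, hk1, hk2, hk3, hk4⟩ := aux_locate p x a (2 * h + 1) (by omega) h1 (by rw [C.pc]; exact h2)
  refine (C.mem _).2 ⟨k, by omega, hk3, hk4, h3, h4.trans ?_⟩
  exact aux_mono H _ C.hH _ _ (by omega) (by omega)

lemma Core.pneg (C : Core h lam α ρ p H Ω) {k : ℕ} (hk : k ≤ 2 * h) : p k < 0 := by
  have b := aux_mono p _ C.hp k (2 * h) (by omega) (by omega)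
  rw [C.pb] at b
  have : -1 / (2 + ρ) < 0 := div_neg_of_neg_of_pos (by norm_num) (by linarith [C.r0])
  linarith

lemma Core.mapsTo (C : Core h lam α ρ p H Ω) : MapsTo (Tnat lam α) Ω Ω := by
  have hl1 := C.l1
  have hl2 := C.l2
  have hr0 := C.r0
  have hr1 := C.r1
  have hl : 0 < lam := by linarith
  have hinv : 1 / ρ = ρ + 2 - lam := by
    rw [div_eq_iff hr0.ne']; nlinarith [C.hq]
  rintro ⟨x, y⟩ hz
  have hb := C.bounds hz
  obtain ⟨k, hk, h1, h2, h3, h4⟩ := (C.mem _).1 hz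
  simp only at h1 h2 h3 h4 hb
  have hneg : x < 0 → |1 / x| = -1 / x := by
    intro hx
    rw [abs_of_neg (one_div_neg.2 hx), neg_div]
  rcases lt_or_ge k (2 * h - 1) with hk1 | hk1
  · -- digit one, negative
    have hx : x < 0 := h2.trans (C.pneg (by omega))
    have hpk := C.pneg (k := k) (by omega)
    have hpk1 := C.pneg (k := k + 1) (by omega)
    have s1 := C.ps k (by omega)
    have s2 := C.ps (k + 1) (by omega)
    have e1 : p (k + 2) = -1 / p k - lam := by
      rw [eq_sub_iff_add_eq, eq_div_iff hpk.ne]; linarith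
    have e2 : p (k + 3) = -1 / p (k + 1) - lam := by
      rw [eq_sub_iff_add_eq, eq_div_iff hpk1.ne]; linarith
    have f1 : -1 / p k ≤ -1 / x := by
      rw [neg_div, neg_div, neg_le_neg_iff]
      exact one_div_le_one_div_of_neg_of_le hx h1
    have f2 : -1 / x < -1 / p (k + 1) := by
      rw [neg_div, neg_div, neg_lt_neg_iff]
      exact one_div_lt_one_div_of_neg_of_lt hpk1 h2
    have g1 := aux_mono p _ C.hp 0 (k + 2) (by omega) (by omega)
    have g2 := aux_mono p _ C.hp (k + 3) (2 * h + 1) (by omega) (by omega)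
    rw [C.p0] at g1
    rw [C.pc] at g2
    have hd := aux_dfun (x := x) hl C.hα 1 (by rw [hneg hx]; push_cast; linarith)
      (by rw [hneg hx]; push_cast; linarith)
    have hT := aux_T hl C.hα hx.ne 1 (by rw [hneg hx]; push_cast; linarith)
      (by rw [hneg hx]; push_cast; linarith)
    rw [C.mem]
    have hy : 0 < lam - y := by linarith
    have hHs := C.Hs (k + 1) (by omega)
    have hHle : H (k + 1) ≤ lam / 2 := by
      rw [← C.Hc]; exact aux_mono H _ C.hH _ _ (by omega) (by omega)
    have hHp : 0 < H (k + 3) := by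
      by_contra hc
      push Not at hc
      have : H (k + 3) * (lam - H (k + 1)) ≤ 0 := mul_nonpos_of_nonpos_of_nonneg hc (by linarith)
      have : H (k + 1 + 2) = H (k + 3) := rfl
      linarith
    refine ⟨k + 2, by omega, ?_⟩
    simp only [Tnat, hT, hd, hneg hx, Real.sign_of_neg hx]
    push_cast
    refine ⟨by linarith, by show _ < p (k + 3); linarith, ?_, ?_⟩
    · apply le_of_lt; apply one_div_pos.2; linarith
    · rw [div_le_iff₀ (by linarith)]
      have : H (k + 1 + 2) = H (k + 2 + 1) := rfl
      rw [← this]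
      refine hHs.symm.le.trans (mul_le_mul_of_nonneg_left ?_ hHp.le)
      linarith
  rcases eq_or_lt_of_le hk1 with hk2 | hk2
  · -- digit two
    subst hk2
    have e : 2 * h - 1 + 1 = 2 * h := by have := C.hh; omega
    rw [e] at h2 h4
    rw [C.pa] at h1
    rw [C.pb] at h2
    rw [C.Hb] at h4
    have hx : x < 0 := h2.trans (div_neg_of_neg_of_pos (by norm_num) (by linarith))
    have f1 : lam + ρ ≤ -1 / x := by
      rw [le_div_iff_of_neg hx]
      rw [div_le_iff₀ (by linarith)] at h1
      linarith
    have f2 : -1 / x < 2 + ρ := by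
      rw [div_lt_iff_of_neg hx]
      rw [lt_div_iff₀ (by linarith)] at h2
      linarith
    have hd := aux_dfun (x := x) hl C.hα 2 (by rw [hneg hx]; push_cast; linarith)
      (by rw [hneg hx]; push_cast; linarith)
    have hT := aux_T hl C.hα hx.ne 2 (by rw [hneg hx]; push_cast; linarith)
      (by rw [hneg hx]; push_cast; linarith)
    rw [C.mem]
    refine ⟨0, by omega, ?_⟩
    simp only [Tnat, hT, hd, hneg hx, Real.sign_of_neg hx, zero_add, C.H1, C.p0, C.p1]
    push_cast
    refine ⟨by linarith, by linarith, ?_, ?_⟩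
    · apply le_of_lt; apply one_div_pos.2; linarith
    · apply one_div_le_one_div_of_le <;> linarith
  · have hk3 : k = 2 * h := by omega
    subst hk3
    rw [C.pb] at h1
    rw [C.pc] at h2
    rw [C.Hc] at h4
    have key0 : ∀ {a b : ℝ}, ρ - lam ≤ a → a < ρ → 0 ≤ b → b ≤ 1 / (2 * lam) → (a, b) ∈ Ω := by
      intro a b q1 q2 q3 q4
      apply C.memA 0 (by omega) (by rw [C.p0]; exact q1) q2 q3
      rw [zero_add, C.H1]
      apply q4.trans
      apply one_div_le_one_div_of_le <;> linarith
    have key1 : ∀ {a b : ℝ}, 1 / ρ - lam ≤ a → a < ρ → 0 ≤ b → b ≤ 1 / lam → (a, b) ∈ Ω := by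
      intro a b q1 q2 q3 q4
      apply C.memA 1 (by have := C.hh; omega) (by rw [C.p1]; exact q1) q2 q3
      rw [show 1 + 1 = 2 from rfl, C.H2]
      exact q4
    rcases lt_trichotomy x 0 with hx | hx | hx
    · obtain ⟨t1, t2, t3⟩ := aux_T_range (ρ := ρ) hl C.hα hx.ne
      simp only [Tnat, t1, Real.sign_of_neg hx]
      generalize dfun lam α x = d at *
      rw [hneg hx] at *
      have f1 : 2 + ρ ≤ -1 / x := by
        rw [le_div_iff_of_neg hx]
        rw [div_le_iff₀ (by linarith)] at h1
        linarith
      have hd : 2 ≤ d := by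
        by_contra hc
        have : d ≤ 1 := by omega
        have : (d : ℝ) ≤ 1 := by exact_mod_cast this
        nlinarith
      have hd' : (2 : ℝ) ≤ d := by exact_mod_cast hd
      rcases eq_or_lt_of_le hd with hd2 | hd2
      · subst hd2
        push_cast at *
        apply key1 (by linarith) t3
        · apply le_of_lt; apply one_div_pos.2; linarith
        · apply one_div_le_one_div_of_le <;> linarith
      · have hd3 : (3 : ℝ) ≤ d := by exact_mod_cast hd2
        have : 3 * lam ≤ d * lam := by nlinarith
        apply key0 t2 t3
        · apply le_of_lt; apply one_div_pos.2; linarith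
        · apply one_div_le_one_div_of_le <;> linarith
    · subst hx
      have hd : dfun lam α 0 = 0 := by
        unfold dfun
        rw [Int.floor_eq_iff, C.hα]
        have a1 : 0 < ρ / lam := by positivity
        have a2 : ρ / lam ≤ 1 := by rw [div_le_one hl]; linarith
        constructor
        · simp; linarith
        · simp; linarith
      simp only [Tnat, Tmap, hd, Real.sign_zero, if_true]
      apply key0
      · linarith
      · linarith
      · simp
      · simp; linarith
    · obtain ⟨t1, t2, t3⟩ := aux_T_range (ρ := ρ) hl C.hα hx.ne'
      simp only [Tnat, t1, Real.sign_of_pos hx]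
      generalize dfun lam α x = d at *
      rw [abs_of_pos (one_div_pos.2 hx)] at *
      have f1 : 1 / ρ < 1 / x := one_div_lt_one_div_of_lt hx h2
      have hd : 1 ≤ d := by
        by_contra hc
        have : d ≤ 0 := by omega
        have : (d : ℝ) ≤ 0 := by exact_mod_cast this
        nlinarith
      rcases eq_or_lt_of_le hd with hd2 | hd2
      · subst hd2
        push_cast at *
        apply key1 (by linarith) t3
        · apply le_of_lt; apply one_div_pos.2; linarith
        · apply one_div_le_one_div_of_le <;> linarith
      · have hd3 : (2 : ℝ) ≤ d := by exact_mod_cast hd2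
        have : 2 * lam ≤ d * lam := by nlinarith
        apply key0 t2 t3
        · apply le_of_lt; apply one_div_pos.2; linarith
        · apply one_div_le_one_div_of_le <;> linarith

/-- The exceptional set in the domain. -/
def badN (lam : ℝ) (Ω : Set (ℝ × ℝ)) : Set (ℝ × ℝ) :=
  Ω ∩ {z | z.1 = 0 ∨ z.2 = 0 ∨ z.2 = lam / 2}

lemma Core.good (C : Core h lam α ρ p H Ω) {z : ℝ × ℝ} (hz : z ∈ Ω \ badN lam Ω) :
    z.1 ≠ 0 ∧ 0 < z.2 ∧ z.2 < lam / 2 := by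
  obtain ⟨h1, h2⟩ := hz
  have hb := C.bounds h1
  have : ¬ (z.1 = 0 ∨ z.2 = 0 ∨ z.2 = lam / 2) := fun hc => h2 ⟨h1, hc⟩
  push Not at this
  exact ⟨this.1, lt_of_le_of_ne hb.2.2.1 (Ne.symm this.2.1), lt_of_le_of_ne hb.2.2.2 this.2.2⟩

lemma Core.inj (C : Core h lam α ρ p H Ω) : InjOn (Tnat lam α) (Ω \ badN lam Ω) := by
  have hl : 0 < lam := by linarith [C.l1]
  rintro ⟨x, y⟩ hz ⟨x', y'⟩ hz' he
  obtain ⟨a1, a2, a3⟩ := C.good hz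
  obtain ⟨b1, b2, b3⟩ := C.good hz'
  simp only at a1 a2 a3 b1 b2 b3
  simp only [Tnat, Prod.mk.injEq, one_div, inv_inj] at he
  obtain ⟨e1, e2⟩ := he
  rw [(aux_T_range (ρ := ρ) hl C.hα a1).1, (aux_T_range (ρ := ρ) hl C.hα b1).1] at e1
  generalize dfun lam α x = d at *
  generalize dfun lam α x' = d' at *
  have hdd : d = d' := by
    have q : ∀ {s t : ℝ}, (s = 1 ∨ s = -1) → (t = 1 ∨ t = -1) →
        (d : ℝ) * lam + s * y = d' * lam + t * y' → d = d' := by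
      intro s t hs ht hst
      have u1 : ((d : ℝ) - d') * lam < 1 * lam := by
        rcases hs with rfl | rfl <;> rcases ht with rfl | rfl <;> linarith
      have u2 : ((d' : ℝ) - d) * lam < 1 * lam := by
        rcases hs with rfl | rfl <;> rcases ht with rfl | rfl <;> linarith
      have v1 := lt_of_mul_lt_mul_right u1 hl.le
      have v2 := lt_of_mul_lt_mul_right u2 hl.le
      have w1 : d - d' < 1 := by exact_mod_cast v1
      have w2 : d' - d < 1 := by exact_mod_cast v2
      omega
    refine q ?_ ?_ e2
    · rcases lt_or_gt_of_ne a1 with hx | hx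
      · right; exact Real.sign_of_neg hx
      · left; exact Real.sign_of_pos hx
    · rcases lt_or_gt_of_ne b1 with hx | hx
      · right; exact Real.sign_of_neg hx
      · left; exact Real.sign_of_pos hx
  subst hdd
  have e3 : |1 / x| = |1 / x'| := by linarith
  rw [abs_div, abs_div, abs_one] at e3
  have e4 : |x| = |x'| := by
    simpa using e3
  rcases lt_or_gt_of_ne a1 with hx | hx <;> rcases lt_or_gt_of_ne b1 with hx' | hx'
  · rw [Real.sign_of_neg hx, Real.sign_of_neg hx'] at e2
    rw [abs_of_neg hx, abs_of_neg hx'] at e4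
    ext <;> simp <;> linarith
  · rw [Real.sign_of_neg hx, Real.sign_of_pos hx'] at e2
    linarith
  · rw [Real.sign_of_pos hx, Real.sign_of_neg hx'] at e2
    linarith
  · rw [Real.sign_of_pos hx, Real.sign_of_pos hx'] at e2
    rw [abs_of_pos hx, abs_of_pos hx'] at e4
    ext <;> simp <;> linarith

lemma aux_split {lam w : ℝ} (hl : 0 < lam) (hw : ∀ n : ℤ, w ≠ n * (lam / 2)) :
    ∃ (d : ℤ) (y : ℝ), 0 < y ∧ y < lam / 2 ∧ (w = d * lam + y ∨ w = d * lam - y) := by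
  have hl2 : 0 < lam / 2 := by linarith
  have h1 := Int.floor_le (w / (lam / 2))
  have h2 := Int.lt_floor_add_one (w / (lam / 2))
  rw [le_div_iff₀ hl2] at h1
  rw [div_lt_iff₀ hl2] at h2
  have h3 := hw ⌊w / (lam / 2)⌋
  have h4 := lt_of_le_of_ne h1 (Ne.symm h3)
  generalize ⌊w / (lam / 2)⌋ = m at *
  rcases Int.even_or_odd' m with ⟨d, rfl | rfl⟩
  · push_cast at *
    exact ⟨d, w - d * lam, by linarith, by linarith, Or.inl (by ring)⟩
  · push_cast at *
    exact ⟨d + 1, (d + 1) * lam - w, by linarith, by linarith, Or.inr (by push_cast; ring)⟩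

lemma Core.surj (C : Core h lam α ρ p H Ω) {x' y' : ℝ} (hz : (x', y') ∈ Ω)
    (hx' : x' ≠ 1 / ρ - lam) (hy' : ∀ n : ℤ, 1 / y' ≠ n * (lam / 2)) :
    (x', y') ∈ Tnat lam α '' (Ω \ badN lam Ω) := by
  have hl1 := C.l1
  have hl2 := C.l2
  have hr0 := C.r0
  have hr1 := C.r1
  have hl : 0 < lam := by linarith
  have hinv : 1 / ρ = ρ + 2 - lam := by
    rw [div_eq_iff hr0.ne']; nlinarith [C.hq]
  have hb := C.bounds hz
  simp only at hb
  obtain ⟨b1, b2, b3, b4⟩ := hb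
  have hy0 : 0 < y' := by
    apply lt_of_le_of_ne b3
    rintro rfl
    exact hy' 0 (by simp)
  obtain ⟨d, y, y0, y1, hw⟩ := aux_split hl hy'
  have hwlow : lam / 2 < 1 / y' := by
    rw [lt_div_iff₀ hy0]; nlinarith
  have hd : 1 ≤ d := by
    by_contra hc
    have : d ≤ 0 := by omega
    have : (d : ℝ) ≤ 0 := by exact_mod_cast this
    have : (d : ℝ) * lam ≤ 0 := by nlinarith
    rcases hw with hw | hw <;> linarith
  have hd1 : (1 : ℝ) ≤ d := by exact_mod_cast hd
  have hdl : lam ≤ d * lam := by nlinarith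
  have hpos : 0 < x' + d * lam := by linarith
  -- reduction
  have red : ∀ s : ℝ, (s = 1 ∨ s = -1) → 1 / y' = d * lam + s * y →
      (s / (x' + d * lam), y) ∈ Ω → (x', y') ∈ Tnat lam α '' (Ω \ badN lam Ω) := by
    intro s hs hw hm
    have hx0 : s / (x' + d * lam) ≠ 0 := by
      apply div_ne_zero _ hpos.ne'
      rcases hs with rfl | rfl <;> norm_num
    have hab : |1 / (s / (x' + d * lam))| = x' + d * lam := by
      rw [one_div_div, abs_div, abs_of_pos hpos]
      rcases hs with rfl | rfl <;> simp
    have hsg : Real.sign (s / (x' + d * lam)) = s := by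
      rcases hs with rfl | rfl
      · apply Real.sign_of_pos; positivity
      · apply Real.sign_of_neg; exact div_neg_of_neg_of_pos (by norm_num) hpos
    refine ⟨(s / (x' + d * lam), y), ⟨hm, ?_⟩, ?_⟩
    · rintro ⟨-, hc | hc | hc⟩
      · exact hx0 hc
      · simp only at hc; linarith
      · simp only at hc; linarith
    · have q1 : ρ - lam ≤ |1 / (s / (x' + d * lam))| - lam * d := by rw [hab]; linarith
      have q2 : |1 / (s / (x' + d * lam))| - lam * d < ρ := by rw [hab]; linarith
      simp only [Tnat]
      rw [aux_T hl C.hα hx0 d q1 q2, aux_dfun hl C.hα d q1 q2, hsg, hab, ← hw]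
      ext
      · simp; ring
      · simp
  obtain ⟨k, hk, k1, k2, k3, k4⟩ := (C.mem _).1 hz
  simp only at k1 k2 k3 k4
  have top : ∀ {x : ℝ}, -1 / (2 + ρ) ≤ x → x < ρ → (x, y) ∈ Ω := by
    intro x q1 q2
    refine C.memA (2 * h) le_rfl (by rw [C.pb]; exact q1) q2 y0.le (by rw [C.Hc]; exact y1.le)
  have hbelow : 1 / (1 + lam) < y' → 1 / ρ - lam ≤ x' := by
    intro hc
    have : k ≠ 0 := by
      rintro rfl
      rw [zero_add, C.H1] at k4
      linarith
    have := aux_mono p _ C.hp 1 k (by omega) (by omega)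
    rw [C.p1] at this
    linarith
  rcases hw with hw | hw
  · apply red 1 (Or.inl rfl) (by rw [hw]; ring)
    apply top
    · have : -1 / (2 + ρ) < 0 := div_neg_of_neg_of_pos (by norm_num) (by linarith)
      have : 0 < 1 / (x' + d * lam) := by positivity
      linarith
    · rcases eq_or_lt_of_le hd with hd2 | hd2
      · subst hd2
        push_cast at *
        have e : 1 / ρ - lam ≤ x' := by
          apply hbelow
          rw [div_lt_iff₀ (by linarith)]
          rw [div_eq_iff hy0.ne'] at hw
          nlinarith
        have e' := lt_of_le_of_ne e (Ne.symm hx')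
        rw [div_lt_comm₀ (by linarith) hr0]
        linarith
      · have hd3 : (2 : ℝ) ≤ d := by exact_mod_cast hd2
        have : 2 * lam ≤ d * lam := by nlinarith
        rw [div_lt_comm₀ (by linarith) hr0]
        linarith
  · apply red (-1) (Or.inr rfl) (by rw [hw]; ring)
    have hneg : -1 / (x' + d * lam) < 0 := div_neg_of_neg_of_pos (by norm_num) hpos
    have lowtop : 2 + ρ ≤ x' + d * lam → -1 / (2 + ρ) ≤ -1 / (x' + d * lam) := by
      intro hc
      rw [neg_div, neg_div, neg_le_neg_iff]
      exact one_div_le_one_div_of_le (by linarith) hc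
    have hcases : d = 1 ∨ d = 2 ∨ 3 ≤ d := by omega
    rcases hcases with rfl | rfl | hd3
    · push_cast at *
      have hyl : 1 / lam < y' := by
        rw [div_lt_iff₀ hl]
        rw [div_eq_iff hy0.ne'] at hw
        nlinarith
      have hk2 : 2 ≤ k := by
        by_contra hc
        have := aux_mono H _ C.hH (k + 1) 2 (by omega) (by have := C.hh; omega)
        rw [C.H2] at this
        linarith
      obtain ⟨m, rfl⟩ : ∃ m, k = m + 2 := ⟨k - 2, by omega⟩
      have s1 := C.ps m (by omega)
      have s2 : p (m + 1) * (p (m + 2 + 1) + lam) = -1 := C.ps (m + 1) (by omega)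
      have s3 : H (m + 2 + 1) * (lam - H (m + 1)) = 1 := C.Hs (m + 1) (by omega)
      have n1 := C.pneg (k := m) (by omega)
      have n2 := C.pneg (k := m + 1) (by omega)
      have hHle : H (m + 1) ≤ lam / 2 := by
        rw [← C.Hc]; exact aux_mono H _ C.hH _ _ (by omega) (by omega)
      refine (C.mem _).2 ⟨m, by omega, ?_, ?_, y0.le, ?_⟩
      · simp only
        rw [le_div_iff₀ hpos]
        nlinarith
      · simp only
        rw [div_lt_iff₀ hpos]
        nlinarith
      · simp only
        rw [div_eq_iff hy0.ne'] at hw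
        by_contra hc
        push Not at hc
        have : y' * (lam - y) < H (m + 2 + 1) * (lam - H (m + 1)) := by
          apply mul_lt_mul' k4 <;> linarith
        linarith
    · push_cast at *
      by_cases hc : 1 / ρ - lam ≤ x'
      · exact top (lowtop (by linarith)) (by linarith)
      · have hyb : y' ≤ 1 / (1 + lam) := by
          by_contra h'
          push Not at h'
          exact hc (hbelow h')
        push Not at hc
        have e : 2 * h - 1 + 1 = 2 * h := by have := C.hh; omega
        refine (C.mem _).2 ⟨2 * h - 1, by omega, ?_, ?_, y0.le, ?_⟩
        · simp only
          rw [C.pa, neg_div, neg_div, neg_le_neg_iff]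
          exact one_div_le_one_div_of_le (by linarith) (by linarith)
        · simp only
          rw [e, C.pb, neg_div, neg_div, neg_lt_neg_iff]
          exact one_div_lt_one_div_of_lt (by linarith) (by linarith)
        · simp only
          rw [e, C.Hb]
          rw [le_div_iff₀ (by linarith)] at hyb
          have : 1 + lam ≤ 1 / y' := by rw [le_div_iff₀ hy0]; linarith
          linarith
    · have hd3' : (3 : ℝ) ≤ d := by exact_mod_cast hd3
      have : 3 * lam ≤ d * lam := by nlinarith
      exact top (lowtop (by linarith)) (by linarith)

lemma aux_null1 (S : Set ℝ) (hS : S.Countable) : volume {z : ℝ × ℝ | z.1 ∈ S} = 0 := by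
  have : {z : ℝ × ℝ | z.1 ∈ S} = S ×ˢ univ := by ext; simp
  rw [this, Measure.volume_eq_prod, Measure.prod_prod, hS.measure_zero, zero_mul]

lemma aux_null2 (S : Set ℝ) (hS : S.Countable) : volume {z : ℝ × ℝ | z.2 ∈ S} = 0 := by
  have : {z : ℝ × ℝ | z.2 ∈ S} = univ ×ˢ S := by ext; simp
  rw [this, Measure.volume_eq_prod, Measure.prod_prod, hS.measure_zero, mul_zero]

lemma Core.main (C : Core h lam α ρ p H Ω) :
    ∃ N N' : Set (ℝ × ℝ), N ⊆ Ω ∧ N' ⊆ Ω ∧ volume N = 0 ∧ volume N' = 0 ∧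
      Set.BijOn (Tnat lam α) (Ω \ N) (Ω \ N') := by
  have hsub : Tnat lam α '' (Ω \ badN lam Ω) ⊆ Ω := by
    rintro _ ⟨z, hz, rfl⟩
    exact C.mapsTo hz.1
  refine ⟨badN lam Ω, Ω \ (Tnat lam α '' (Ω \ badN lam Ω)), inter_subset_left, sdiff_subset,
    ?_, ?_, ?_⟩
  · have n1 := aux_null1 {0} (countable_singleton 0)
    have n2 := aux_null2 {0, lam / 2} ((countable_singleton _).insert _)
    refine measure_mono_null ?_ (measure_union_null n1 n2)
    rintro z ⟨-, hz⟩
    simpa using hz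
  · have n1 := aux_null1 {1 / ρ - lam} (countable_singleton _)
    have n2 := aux_null2 (range fun n : ℤ => 1 / (n * (lam / 2))) (countable_range _)
    refine measure_mono_null ?_ (measure_union_null n1 n2)
    rintro ⟨x, y⟩ ⟨h1, h2⟩
    by_contra hc
    simp only [mem_union, mem_ofPred_eq, mem_singleton_iff, mem_range, not_or, not_exists] at hc
    apply h2
    apply C.surj h1 hc.1
    intro n hn
    apply hc.2 n
    rw [← hn, one_div_one_div]
  · rw [sdiff_sdiff_cancel_left hsub]
    exact C.inj.bijOn_image

end core

/-- Partition points, listed from the right. -/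
noncomputable def Gs (lam ρ : ℝ) : ℕ → ℝ
  | 0 => ρ
  | 1 => -1 / (2 + ρ)
  | (k + 2) => -1 / (Gs lam ρ k + lam)

/-- Heights. -/
noncomputable def Hs (lam : ℝ) : ℕ → ℝ
  | 0 => 0
  | 1 => 1 / (1 + lam)
  | (k + 2) => 1 / (lam - Hs lam k)

lemma aux_parity {P : ℕ → Prop} (h : ℕ) (h0 : ∀ n ≤ h, P (2 * n)) (h1 : ∀ n ≤ h, P (2 * n + 1)) :
    ∀ k ≤ 2 * h + 1, P k := by
  intro k hk
  rcases Nat.even_or_odd' k with ⟨n, rfl | rfl⟩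
  · exact h0 n (by omega)
  · exact h1 n (by omega)

lemma aux_G_even (lam ρ : ℝ) (a : ℕ → ℝ) (ha : ∀ n, a (n + 2) = lam * a (n + 1) - a n) (m : ℕ)
    (hpos : ∀ n ≤ m + 1, 0 < a n) (s : ℕ) (hb : Gs lam ρ s + lam = a 1 / a 0) :
    ∀ n ≤ m, Gs lam ρ (2 * n + s) + lam = a (n + 1) / a n := by
  intro n
  induction n with
  | zero => intro _; simpa using hb
  | succ n ih =>
    intro hn
    have e : 2 * (n + 1) + s = (2 * n + s) + 2 := by ring
    have p1 := hpos n (by omega)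
    have p2 := hpos (n + 1) (by omega)
    rw [e, Gs, ih (by omega), ha]
    field_simp
    ring

lemma aux_H (lam : ℝ) (a : ℕ → ℝ) (ha : ∀ n, a (n + 2) = lam * a (n + 1) - a n) (m : ℕ)
    (hpos : ∀ n ≤ m + 1, 1 ≤ n → 0 < a n) (s : ℕ) (hb : Hs lam s = a 0 / a 1) :
    ∀ n ≤ m, Hs lam (2 * n + s) = a n / a (n + 1) := by
  intro n
  induction n with
  | zero => intro _; simpa using hb
  | succ n ih =>
    intro hn
    have e : 2 * (n + 1) + s = (2 * n + s) + 2 := by ring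
    have p1 := hpos (n + 1) (by omega) (by omega)
    have p2 := hpos (n + 2) (by omega) (by omega)
    have p3 := ha n
    rw [e, Hs, ih (by omega)]
    have : lam - a n / a (n + 1) = a (n + 2) / a (n + 1) := by
      rw [p3]; field_simp
    rw [this, one_div_div]

lemma core_of_B (h : ℕ) (hh : 1 ≤ h) (lam α ρ : ℝ) (l1 : 1 < lam) (l2 : lam < 2) (r0 : 0 < ρ)
    (r1 : ρ < 1) (hq : ρ ^ 2 + (2 - lam) * ρ = 1) (hα : α = ρ / lam) (B : ℕ → ℝ)
    (B0 : B 0 = 0) (B1 : B 1 = 1) (Brec : ∀ n, B (n + 2) = lam * B (n + 1) - B n)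
    (Bpos : ∀ n, 1 ≤ n → n ≤ 2 * h + 2 → 0 < B n) (Bmid : B (h + 1) = B (h + 2)) :
    Core h lam α ρ (fun k => Gs lam ρ (2 * h + 1 - k)) (Hs lam)
      {z | ∃ k ≤ 2 * h, Gs lam ρ (2 * h + 1 - k) ≤ z.1 ∧ z.1 < Gs lam ρ (2 * h + 1 - (k + 1)) ∧
        0 ≤ z.2 ∧ z.2 ≤ Hs lam (k + 1)} ∧
    (∀ j ≤ h, Hs lam (2 * j) = B j / B (j + 1)) ∧
    (∀ j ≤ h, Hs lam (2 * j + 1) = (B j + B (j + 1)) / (B (j + 1) + B (j + 2))) := by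
  have hl : 0 < lam := by linarith
  have Bnn : ∀ n ≤ 2 * h + 2, 0 ≤ B n := by
    intro n hn
    rcases Nat.eq_zero_or_pos n with rfl | h0
    · rw [B0]
    · exact (Bpos n h0 hn).le
  have B2 : B 2 = lam := by rw [Brec 0, B0, B1]; ring
  have bp := Bpos (h + 1) (by omega) (by omega)
  have Bh : B h = (lam - 1) * B (h + 1) := by
    have := Brec h; rw [← Bmid] at this; linarith
  -- heights
  have HE : ∀ j ≤ h, Hs lam (2 * j) = B j / B (j + 1) :=
    aux_H lam B Brec h (fun n hn h1 => Bpos n h1 (by omega)) 0 (by simp [Hs, B0])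
  have HO : ∀ j ≤ h, Hs lam (2 * j + 1) = (B j + B (j + 1)) / (B (j + 1) + B (j + 2)) :=
    aux_H lam (fun n => B n + B (n + 1)) (fun n => by
        show B (n + 2) + B (n + 2 + 1) = lam * (B (n + 1) + B (n + 1 + 1)) - (B n + B (n + 1))
        rw [show n + 2 + 1 = (n + 1) + 2 by ring, Brec (n + 1), Brec n]; ring) h
      (fun n hn h1 => add_pos (Bpos n h1 (by omega)) (Bpos (n + 1) (by omega) (by omega))) 1
      (by simp [Hs, B0, B1, B2])
  have Hlt : ∀ k ≤ 2 * h - 1, 0 < lam - Hs lam k := by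
    intro k hk
    refine aux_parity (P := fun k => k ≤ 2 * h - 1 → 0 < lam - Hs lam k) h ?_ ?_ k (by omega) hk
    · intro n hn hk
      have q1 := Bpos (n + 1) (by omega) (by omega)
      have q2 := Bpos (n + 2) (by omega) (by omega)
      rw [HE n hn, sub_pos, div_lt_iff₀ q1]
      linarith [Brec n]
    · intro n hn hk
      have q1 := Bpos (n + 1) (by omega) (by omega)
      have q2 := Bpos (n + 2) (by omega) (by omega)
      have q3 := Bpos (n + 3) (by omega) (by omega)
      rw [HO n hn, sub_pos, div_lt_iff₀ (by linarith)]
      have : B (n + 3) = lam * B (n + 2) - B (n + 1) := Brec (n + 1)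
      linarith [Brec n]
  have Hinc : ∀ k < 2 * h + 1, Hs lam k < Hs lam (k + 1) := by
    have : ∀ k, (k < 2 * h + 1 → Hs lam k < Hs lam (k + 1)) ∧
        (k + 1 < 2 * h + 1 → Hs lam (k + 1) < Hs lam (k + 2)) := by
      intro k
      induction k with
      | zero =>
        refine ⟨fun _ => ?_, fun _ => ?_⟩
        · simp only [Hs]; positivity
        · simp only [Hs, sub_zero]
          apply one_div_lt_one_div_of_lt <;> linarith
      | succ k ih =>
        refine ⟨ih.2, fun hk => ?_⟩
        have := ih.1 (by omega)
        have q1 := Hlt (k + 1) (by omega)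
        show Hs lam (k + 2) < Hs lam (k + 1 + 2)
        rw [Hs, Hs]
        apply one_div_lt_one_div_of_lt q1
        linarith
    intro k hk
    exact (this k).1 hk
  -- points
  have GE := aux_G_even lam ρ (fun n => B n * ρ + B (n + 1)) (fun n => by
        show B (n + 2) * ρ + B (n + 2 + 1) = lam * (B (n + 1) * ρ + B (n + 1 + 1)) - (B n * ρ + B (n + 1))
        rw [show n + 2 + 1 = (n + 1) + 2 by ring, Brec (n + 1), Brec n]; ring) h
      (fun n hn => by
        have q1 := Bnn n (by omega)
        have q2 := Bpos (n + 1) (by omega) (by omega)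
        show 0 < B n * ρ + B (n + 1)
        positivity) 0 (by simp [Gs, B0, B1, B2])
  have hcpos : ∀ n ≤ h + 1, 0 < (2 + ρ) * B (n + 1) - B n := by
    intro n hn
    have q1 := Bpos (n + 1) (by omega) (by omega)
    have q2 := Bpos (n + 2) (by omega) (by omega)
    have := Brec n
    nlinarith
  have GO := aux_G_even lam ρ (fun n => (2 + ρ) * B (n + 1) - B n) (fun n => by
        show (2 + ρ) * B (n + 2 + 1) - B (n + 2) =
          lam * ((2 + ρ) * B (n + 1 + 1) - B (n + 1)) - ((2 + ρ) * B (n + 1) - B n)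
        rw [show n + 2 + 1 = (n + 1) + 2 by ring, Brec (n + 1), Brec n]; ring) h hcpos 1 (by
        simp only [Gs, zero_add, B0, B1, show 1 + 1 = 2 from rfl, B2]
        have h2r : 2 + ρ ≠ 0 := by positivity
        field_simp
        ring)
  have Gpos : ∀ k ≤ 2 * h + 1, 0 < Gs lam ρ k + lam := by
    apply aux_parity
    · intro n hn
      have := GE n hn
      rw [add_zero] at this
      rw [this]
      have q1 := Bnn n (by omega)
      have q2 := Bpos (n + 1) (by omega) (by omega)
      have q3 := Bpos (n + 2) (by omega) (by omega)
      show 0 < (B (n + 1) * ρ + B (n + 2)) / (B n * ρ + B (n + 1))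
      positivity
    · intro n hn
      rw [GO n hn]
      exact div_pos (hcpos _ (by omega)) (hcpos _ (by omega))
  have Gdec : ∀ k ≤ 2 * h, Gs lam ρ (k + 1) < Gs lam ρ k := by
    have : ∀ k, (k ≤ 2 * h → Gs lam ρ (k + 1) < Gs lam ρ k) ∧
        (k + 1 ≤ 2 * h → Gs lam ρ (k + 2) < Gs lam ρ (k + 1)) := by
      intro k
      induction k with
      | zero =>
        refine ⟨fun _ => ?_, fun _ => ?_⟩
        · simp only [Gs]
          have : -1 / (2 + ρ) < 0 := div_neg_of_neg_of_pos (by norm_num) (by linarith)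
          linarith
        · simp only [Gs]
          rw [neg_div, neg_div, neg_lt_neg_iff]
          apply one_div_lt_one_div_of_lt <;> linarith
      | succ k ih =>
        refine ⟨ih.2, fun hk => ?_⟩
        have := ih.1 (by omega)
        have q1 := Gpos (k + 1) (by omega)
        show Gs lam ρ (k + 1 + 2) < Gs lam ρ (k + 2)
        rw [Gs, Gs]
        rw [neg_div, neg_div, neg_lt_neg_iff]
        apply one_div_lt_one_div_of_lt q1
        linarith
    intro k hk
    exact (this k).1 hk
  have eh : B (h + 1 + 1) = B (h + 1) := Bmid.symm
  refine ⟨⟨hh, l1, l2, r0, r1, hq, hα, ?_, ?_, ?_, ?_, ?_, ?_, ?_, ?_, ?_, ?_, ?_, Hinc, rfl, ?_,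
    fun z => Iff.rfl⟩, HE, HO⟩
  · intro k hk
    have := Gdec (2 * h - k) (by omega)
    show Gs lam ρ (2 * h + 1 - k) < Gs lam ρ (2 * h + 1 - (k + 1))
    rw [show 2 * h + 1 - k = 2 * h - k + 1 by omega, show 2 * h + 1 - (k + 1) = 2 * h - k by omega]
    exact this
  · show Gs lam ρ (2 * h + 1 - 0) = _
    rw [Nat.sub_zero, eq_sub_iff_add_eq, GO h le_rfl]
    simp only [eh, Bh]
    rw [div_eq_iff]
    · linear_combination (-B (h + 1)) * hq
    · have := hcpos h (by omega)
      rw [Bh] at this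
      exact this.ne'
  · show Gs lam ρ (2 * h + 1 - 1) = _
    have := GE h le_rfl
    rw [add_zero] at this
    rw [Nat.add_sub_cancel, eq_sub_iff_add_eq, this]
    simp only [eh, Bh]
    have q : 0 < (lam - 1) * B (h + 1) * ρ + B (h + 1) := by
      have : 0 < lam - 1 := by linarith
      positivity
    rw [div_eq_div_iff q.ne' r0.ne']
    linear_combination (B (h + 1)) * hq
  · show Gs lam ρ (2 * h + 1 - (2 * h - 1)) = _
    rw [show 2 * h + 1 - (2 * h - 1) = 2 by omega]
    simp only [Gs]
    rw [add_comm]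
  · show Gs lam ρ (2 * h + 1 - 2 * h) = _
    rw [show 2 * h + 1 - 2 * h = 1 by omega]
    simp only [Gs]
  · show Gs lam ρ (2 * h + 1 - (2 * h + 1)) = _
    rw [Nat.sub_self]
    simp only [Gs]
  · intro k hk
    have := Gpos (2 * h - 1 - k) (by omega)
    show Gs lam ρ (2 * h + 1 - k) * (Gs lam ρ (2 * h + 1 - (k + 2)) + lam) = -1
    rw [show 2 * h + 1 - k = 2 * h - 1 - k + 2 by omega,
      show 2 * h + 1 - (k + 2) = 2 * h - 1 - k by omega, Gs]
    field_simp
  · simp only [Hs]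
  · simp only [Hs, sub_zero]
  · rw [HE h le_rfl, Bh]
    field_simp
  · rw [HO h le_rfl, Bh, ← Bmid]
    field_simp
    ring
  · intro k hk
    have := Hlt k hk
    rw [Hs]
    field_simp

lemma Core.orbit {h : ℕ} {lam α ρ : ℝ} {p H : ℕ → ℝ} {Ω : Set (ℝ × ℝ)}
    (C : Core h lam α ρ p H Ω) :
    (∀ j ≤ h, (Tmap lam α)^[j] ((α - 1) * lam) = p (2 * j)) ∧
    (∀ j < h, (Tmap lam α)^[j + 1] (α * lam) = p (2 * j + 1)) := by
  have hl1 := C.l1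
  have hl2 := C.l2
  have hr0 := C.r0
  have hr1 := C.r1
  have hl : 0 < lam := by linarith
  have hinv : 1 / ρ = ρ + 2 - lam := by
    rw [div_eq_iff hr0.ne']; nlinarith [C.hq]
  have hαl : α * lam = ρ := by rw [C.hα]; field_simp
  have step : ∀ k, k + 2 < 2 * h + 1 → Tmap lam α (p k) = p (k + 2) := by
    intro k hk
    have n1 := C.pneg (k := k) (by omega)
    have s1 := C.ps k (by omega)
    have e1 : |1 / p k| = p (k + 2) + lam := by
      rw [abs_of_neg (one_div_neg.2 n1), ← neg_div, div_eq_iff n1.ne]; linarith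
    have g1 := aux_mono p _ C.hp 0 (k + 2) (by omega) (by omega)
    have g2 := aux_mono p _ C.hp (k + 3) (2 * h + 1) (by omega) (by omega)
    have g3 : p (k + 2) < p (k + 3) := C.hp (k + 2) (by omega)
    rw [C.p0] at g1
    rw [C.pc] at g2
    rw [aux_T hl C.hα n1.ne 1 (by rw [e1]; push_cast; linarith) (by rw [e1]; push_cast; linarith), e1]
    push_cast
    ring
  constructor
  · intro j
    induction j with
    | zero =>
      intro _
      rw [Function.iterate_zero, id, mul_zero, C.p0, sub_mul, hαl, one_mul]
    | succ j ih =>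
      intro hj
      rw [Function.iterate_succ_apply', ih (by omega), step _ (by omega)]
      rfl
  · intro j
    induction j with
    | zero =>
      intro _
      have e1 : |1 / ρ| = 1 / ρ := abs_of_pos (by positivity)
      rw [zero_add, Function.iterate_one, hαl, mul_zero, zero_add, C.p1,
        aux_T hl C.hα hr0.ne' 1 (by rw [e1]; push_cast; linarith) (by rw [e1]; push_cast; linarith), e1]
      push_cast
      ring
    | succ j ih =>
      intro hj
      rw [Function.iterate_succ_apply', ih (by omega), step _ (by omega)]
      rfl

/-- Theorem 2.14: for odd `q = 2h+3` and `α = ρ/λ`, the natural extension map `𝒯_ρ`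
is a bijection of `Ω_ρ` off of a set of two-dimensional Lebesgue measure zero. -/
theorem stmt16 (h q : ℕ) (hh : 1 ≤ h) (hq : q = 2 * h + 3) (lam α ρ : ℝ)
    (hlam : lam = 2 * Real.cos (Real.pi / q))
    (hρ : ρ = (lam - 2 + Real.sqrt (lam ^ 2 - 4 * lam + 8)) / 2)
    (hα : α = ρ / lam)
    (B : ℕ → ℝ)
    (hB : ∀ n : ℕ, B n = Real.sin (n * Real.pi / q) / Real.sin (Real.pi / q))
    (ℓ r : ℕ → ℝ)
    (hℓ : ∀ n, ℓ n = (Tmap lam α)^[n] ((α - 1) * lam))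
    (hr : ∀ n, r n = (Tmap lam α)^[n] (α * lam))
    (Ω : Set (ℝ × ℝ))
    (hΩ : Ω = (⋃ j ∈ Finset.Icc 1 h,
        Ico (ℓ (j - 1)) (r j) ×ˢ Icc (0 : ℝ) ((B (j - 1) + B j) / (B j + B (j + 1))))
      ∪ (⋃ j ∈ Finset.Icc 1 h, Ico (r j) (ℓ j) ×ˢ Icc (0 : ℝ) (B j / B (j + 1)))
      ∪ Ico (ℓ h) ρ ×ˢ Icc (0 : ℝ) (lam / 2)) :
    ∃ N N' : Set (ℝ × ℝ), N ⊆ Ω ∧ N' ⊆ Ω ∧ volume N = 0 ∧ volume N' = 0 ∧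
      Set.BijOn (Tnat lam α) (Ω \ N) (Ω \ N') := by
  have hq0 : (0 : ℝ) < q := by rw [hq]; positivity
  have hqc : (q : ℝ) = 2 * h + 3 := by rw [hq]; push_cast; ring
  have hh' : (1 : ℝ) ≤ h := by exact_mod_cast hh
  have hpi := Real.pi_pos
  have t0 : 0 < Real.pi / q := by positivity
  have t1 : Real.pi / q < Real.pi / 3 := by
    apply div_lt_div_of_pos_left hpi (by norm_num); linarith
  have hs : 0 < Real.sin (Real.pi / q) := Real.sin_pos_of_pos_of_lt_pi t0 (by linarith)
  have l1 : 1 < lam := by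
    have := Real.cos_lt_cos_of_nonneg_of_le_pi t0.le (by linarith) t1
    rw [Real.cos_pi_div_three] at this
    linarith
  have l2 : lam < 2 := by
    have := Real.cos_lt_cos_of_nonneg_of_le_pi le_rfl (by linarith) t0
    rw [Real.cos_zero] at this
    linarith
  have hsq : Real.sqrt (lam ^ 2 - 4 * lam + 8) ^ 2 = lam ^ 2 - 4 * lam + 8 :=
    Real.sq_sqrt (by nlinarith)
  have hsq0 := Real.sqrt_nonneg (lam ^ 2 - 4 * lam + 8)
  have hroot : ρ ^ 2 + (2 - lam) * ρ = 1 := by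
    rw [hρ]; nlinarith
  have r0 : 0 < ρ := by
    have : 2 - lam < Real.sqrt (lam ^ 2 - 4 * lam + 8) := by
      apply Real.lt_sqrt_of_sq_lt; nlinarith
    rw [hρ]; linarith
  have r1 : ρ < 1 := by nlinarith
  have B0 : B 0 = 0 := by rw [hB]; simp
  have B1 : B 1 = 1 := by rw [hB]; simp [hs.ne']
  have Brec : ∀ n, B (n + 2) = lam * B (n + 1) - B n := by
    intro n
    rw [hB, hB, hB, hlam]
    have a1 : ((n + 2 : ℕ) : ℝ) * Real.pi / q = ((n + 1 : ℕ) : ℝ) * Real.pi / q + Real.pi / q := by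
      push_cast; ring
    have a2 : (n : ℝ) * Real.pi / q = ((n + 1 : ℕ) : ℝ) * Real.pi / q - Real.pi / q := by
      push_cast; ring
    rw [a1, a2, Real.sin_add, Real.sin_sub]
    field_simp
    ring
  have Bpos : ∀ n, 1 ≤ n → n ≤ 2 * h + 2 → 0 < B n := by
    intro n h1 h2
    rw [hB]
    have c1 : (1 : ℝ) ≤ n := by exact_mod_cast h1
    have c2 : (n : ℝ) ≤ 2 * h + 2 := by exact_mod_cast h2
    refine div_pos (Real.sin_pos_of_pos_of_lt_pi (by positivity) ?_) hs
    rw [div_lt_iff₀ hq0]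
    nlinarith
  have Bmid : B (h + 1) = B (h + 2) := by
    rw [hB, hB]
    have : ((h + 1 : ℕ) : ℝ) * Real.pi / q = Real.pi - ((h + 2 : ℕ) : ℝ) * Real.pi / q := by
      rw [eq_sub_iff_add_eq, ← add_div, div_eq_iff hq0.ne', hqc]
      push_cast; ring
    rw [this, Real.sin_pi_sub]
  obtain ⟨C, HE, HO⟩ := core_of_B h hh lam α ρ l1 l2 r0 r1 hroot hα B B0 B1 Brec Bpos Bmid
  have key := C.main
  generalize hp : (fun k => Gs lam ρ (2 * h + 1 - k)) = p at *
  have orb := C.orbit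
  obtain ⟨O1, O2⟩ := orb
  have pc := C.pc
  have L : ∀ j ≤ h, ℓ j = p (2 * j) := fun j hj => by rw [hℓ]; exact O1 j hj
  have R : ∀ j < h, r (j + 1) = p (2 * j + 1) := fun j hj => by rw [hr]; exact O2 j hj
  have hlam2 : lam / 2 = Hs lam (2 * h + 1) := C.Hc.symm
  convert key using 0
  suffices hS : Ω = {z | ∃ k ≤ 2 * h, Gs lam ρ (2 * h + 1 - k) ≤ z.1 ∧
      z.1 < Gs lam ρ (2 * h + 1 - (k + 1)) ∧ 0 ≤ z.2 ∧ z.2 ≤ Hs lam (k + 1)} by rw [← hS]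
  ext ⟨x, y⟩
  rw [C.mem, hΩ]
  simp only [mem_union, mem_iUnion, mem_prod, mem_Ico, mem_Icc, Finset.mem_Icc, exists_prop]
  constructor
  · rintro ((⟨j, ⟨j1, j2⟩, ⟨a, b⟩, c, d⟩ | ⟨j, ⟨j1, j2⟩, ⟨a, b⟩, c, d⟩) | ⟨⟨a, b⟩, c, d⟩)
    · obtain ⟨i, rfl⟩ : ∃ i, j = i + 1 := ⟨j - 1, by omega⟩
      rw [Nat.add_sub_cancel] at a d
      rw [L i (by omega)] at a
      rw [R i (by omega)] at b
      exact ⟨2 * i, by omega, a, b, c, by rw [HO i (by omega)]; exact d⟩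
    · obtain ⟨i, rfl⟩ : ∃ i, j = i + 1 := ⟨j - 1, by omega⟩
      rw [L (i + 1) (by omega)] at b
      rw [R i (by omega)] at a
      refine ⟨2 * i + 1, by omega, a, b, c, ?_⟩
      rw [show 2 * i + 1 + 1 = 2 * (i + 1) by ring, HE (i + 1) (by omega)]; exact d
    · rw [L h le_rfl] at a
      exact ⟨2 * h, le_rfl, a, by rw [pc]; exact b, c, by rw [← hlam2]; exact d⟩
  · rintro ⟨k, hk, a, b, c, d⟩
    rcases eq_or_lt_of_le hk with rfl | hk
    · right
      rw [L h le_rfl]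
      rw [pc] at b
      rw [← hlam2] at d
      exact ⟨⟨a, b⟩, c, d⟩
    left
    rcases Nat.even_or_odd' k with ⟨i, rfl | rfl⟩
    · left
      refine ⟨i + 1, ⟨by omega, by omega⟩, ?_⟩
      rw [Nat.add_sub_cancel, L i (by omega), R i (by omega)]
      rw [HO i (by omega)] at d
      exact ⟨⟨a, b⟩, c, d⟩
    · right
      refine ⟨i + 1, ⟨by omega, by omega⟩, ?_⟩
      rw [L (i + 1) (by omega), R i (by omega)]
      rw [show 2 * i + 1 + 1 = 2 * (i + 1) by ring, HE (i + 1) (by omega)] at d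
      exact ⟨⟨a, b⟩, c, d⟩
end

section
/- Let q ≥ 3 be an integer, λ = 2cos(π/q), and 1/2 ≤ α ≤ 1/λ. Let x ∈ [λ(α−1), αλ] be such that T_α^n(x) ≠ 0 for all n ≥ 0, and let ε_n = sgn(T_α^{n−1}(x)), d_n = d(T_α^{n−1}(x)), and define R_{−1} = 1, R_0 = 0, R_n = d_n λ R_{n−1} + ε_n R_{n−2}, S_{−1} = 0, S_0 = 1, S_n = d_n λ S_{n−1} + ε_n S_{n−2} for n ≥ 1. Then for every n ≥ 1, |x − R_n/S_n| ≤ αλ/((1 + αλ − λ)·S_n²); in particular the α-Rosen convergents R_n/S_n converge to x as n → ∞. -/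
open Set MeasureTheory

/-- The invariant of the pair `(t_n, S_{n-1}/S_n)`. -/
def RInv (l t V : ℝ) : Prop :=
  0 ≤ V ∧ V ≤ 8 / (4 - l ^ 2) ∧ (t < 0 → V ≤ l ∧ l * (V - t) + (l ^ 2 - 2) * t * V ≤ 2)

lemma rosen_V_lt {l s V : ℝ} (h0 : 0 < l) (h2 : l < 2) (hl : 2 ≤ l ^ 2)
    (hs0 : 0 < s) (hs : s ≤ l / 2) (h : l * (V + s) - (l ^ 2 - 2) * s * V ≤ 2) : V < l := by
  have hD : 0 < l - (l ^ 2 - 2) * s := by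
    have : (l ^ 2 - 2) * s ≤ (l ^ 2 - 2) * (l / 2) := mul_le_mul_of_nonneg_left hs (by linarith)
    have h4 : l ^ 2 < 4 := by nlinarith
    nlinarith
  have h4 : l ^ 2 < 4 := by nlinarith
  have h5 : l * (V * (l - (l ^ 2 - 2) * s)) ≤ l * (2 - l * s) :=
    mul_le_mul_of_nonneg_left (by nlinarith) h0.le
  have h6 : (l * V) * (l - (l ^ 2 - 2) * s) < 2 * (l - (l ^ 2 - 2) * s) := by
    nlinarith [mul_pos hs0 (by linarith : (0:ℝ) < 4 - l ^ 2)]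
  have h7 : l * V < 2 := lt_of_mul_lt_mul_right h6 hD.le
  nlinarith

/-- A small `V` satisfies the invariant. -/
lemma rosen_small {l t V : ℝ} (h1 : 1 ≤ l) (h2 : l < 2) (ht : -(l / 2) ≤ t) (hV0 : 0 ≤ V)
    (hV : l * V ≤ 1) : RInv l t V := by
  have h4 : 0 < 4 - l ^ 2 := by nlinarith
  have hV1 : V ≤ 1 := by nlinarith
  refine ⟨hV0, ?_, fun ht0 => ⟨by linarith, ?_⟩⟩
  · rw [le_div_iff₀ h4]; nlinarith
  · have hc : 0 ≤ l - (l ^ 2 - 2) * V := by nlinarith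
    have e1 : 0 ≤ (l / 2 + t) * (l - (l ^ 2 - 2) * V) := mul_nonneg (by linarith) hc
    have e2 : 0 ≤ (1 - l * V) * (4 - l ^ 2) := mul_nonneg (by linarith) h4.le
    nlinarith

lemma rosen_final {l α t V : ℝ} (h1 : 1 ≤ l) (h2 : l < 2) (hl : l = 1 ∨ 2 ≤ l ^ 2)
    (ha1 : 1 / 2 ≤ α) (ha2 : α * l ≤ 1) (ht : l * (α - 1) ≤ t) (ht' : t ≤ α * l)
    (h : RInv l t V) : 0 < 1 + α * l - l ∧ 0 < 1 + t * V ∧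
      |t| * (1 + α * l - l) ≤ α * l * (1 + t * V) ∧ 1 + t * V ≤ 1 + 8 / (4 - l ^ 2) := by
  obtain ⟨hV0, hVC, hf⟩ := h
  have hal : l / 2 ≤ α * l := by nlinarith
  have hp : 0 < 1 + α * l - l := by linarith
  have h4 : 0 < 4 - l ^ 2 := by nlinarith
  have hup : 1 + t * V ≤ 1 + 8 / (4 - l ^ 2) := by
    have : t * V ≤ 1 * V := mul_le_mul_of_nonneg_right (by linarith) hV0
    linarith
  rcases le_or_gt 0 t with h0 | h0
  · have htV := mul_nonneg h0 hV0
    refine ⟨hp, by linarith, ?_, hup⟩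
    rw [abs_of_nonneg h0]
    nlinarith [mul_nonneg (by linarith : 0 ≤ α * l) htV]
  · obtain ⟨hVl, hf⟩ := hf h0
    rw [abs_of_neg h0]
    obtain ⟨s, rfl⟩ : ∃ s, t = -s := ⟨-t, by ring⟩
    have hs0 : 0 < s := by linarith
    have hs : s ≤ l / 2 := by nlinarith
    have key : s * (2 - l) + s * V ≤ 1 := by
      rcases hl with rfl | hl
      · nlinarith
      · have hD : 0 < l - (l ^ 2 - 2) * s := by
          have : (l ^ 2 - 2) * s ≤ (l ^ 2 - 2) * (l / 2) :=
            mul_le_mul_of_nonneg_left hs (by linarith)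
          nlinarith
        have h5 : s * (V * (l - (l ^ 2 - 2) * s)) ≤ s * (2 - l * s) :=
          mul_le_mul_of_nonneg_left (by nlinarith) hs0.le
        have h6 : (s * (2 - l) + s * V) * (l - (l ^ 2 - 2) * s) ≤ 1 * (l - (l ^ 2 - 2) * s) := by
          have e1 : 0 ≤ l * (s - 1) ^ 2 := by positivity
          have e2 : 0 ≤ (2 - l) * (l ^ 2 - 2) * s ^ 2 :=
            mul_nonneg (mul_nonneg (by linarith) (by linarith)) (sq_nonneg s)
          nlinarith
        exact le_of_mul_le_mul_right h6 hD
    have hlt : 0 < 1 - s * V := by nlinarith [mul_pos hs0 (by linarith : 0 < 2 - l)]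
    refine ⟨hp, by linarith, ?_, hup⟩
    -- s (1 - l) + α l s ≤ α l (1 - s V)
    have e1 : 0 ≤ α * l * (1 - (s * (2 - l) + s * V)) :=
      mul_nonneg (by linarith) (by linarith)
    have e2 : 0 ≤ s * ((l - 1) * (1 - α * l)) :=
      mul_nonneg hs0.le (mul_nonneg (by linarith) (by linarith))
    nlinarith

lemma rosen_T {l α t : ℝ} (h1 : 1 ≤ l) (ha1 : 1 / 2 ≤ α) (ha2 : α * l ≤ 1)
    (ht : l * (α - 1) ≤ t) (ht' : t ≤ α * l) (h0 : t ≠ 0) :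
    (1 : ℤ) ≤ dfun l α t ∧ l * (α - 1) ≤ Tmap l α t ∧ Tmap l α t < α * l ∧
      |t| * (Tmap l α t + l * dfun l α t) = 1 := by
  have hl : 0 < l := by linarith
  have htp : 0 < |t| := abs_pos.mpr h0
  have hT : Tmap l α t = 1 / |t| - l * dfun l α t := by
    rw [Tmap, if_neg h0, abs_div, abs_one]
  have hu : |1 / (t * l)| = 1 / |t| / l := by
    rw [abs_div, abs_one, abs_mul, abs_of_pos hl, div_div]
  have hat : |t| ≤ α * l := abs_le.mpr ⟨by nlinarith, ht'⟩
  have f1 : (dfun l α t : ℝ) ≤ 1 / |t| / l + 1 - α := by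
    rw [← hu]; exact Int.floor_le _
  have f2 : 1 / |t| / l + 1 - α < (dfun l α t : ℝ) + 1 := by
    rw [← hu]; exact Int.lt_floor_add_one _
  have hul : l * (1 / |t| / l) = 1 / |t| := by field_simp
  refine ⟨?_, ?_, ?_, ?_⟩
  · rw [dfun, Int.le_floor, hu]
    have : α ≤ 1 / |t| / l := by
      rw [div_div, le_div_iff₀ (by positivity)]
      calc α * (|t| * l) ≤ α * ((α * l) * l) := by gcongr
        _ = (α * l) * (α * l) := by ring
        _ ≤ 1 := by nlinarith
    push_cast; linarith
  · rw [hT]; nlinarith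
  · rw [hT]; nlinarith
  · rw [hT]; field_simp; ring

lemma rosen_step {l α t V : ℝ} (h1 : 1 ≤ l) (h2 : l < 2) (hl : l = 1 ∨ 2 ≤ l ^ 2)
    (ha1 : 1 / 2 ≤ α) (ha2 : α * l ≤ 1) (ht : l * (α - 1) ≤ t) (ht' : t ≤ α * l) (h0 : t ≠ 0)
    (h : RInv l t V) : 0 < dfun l α t * l + Real.sign t * V ∧
      RInv l (Tmap l α t) (1 / (dfun l α t * l + Real.sign t * V)) := by
  obtain ⟨hd, hT1, hT2, hT3⟩ := rosen_T h1 ha1 ha2 ht ht' h0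
  obtain ⟨hV0, hVC, hf⟩ := h
  have hTl : -(l / 2) ≤ Tmap l α t := by nlinarith
  have h4 : 0 < 4 - l ^ 2 := by nlinarith
  have hdR : (1 : ℝ) ≤ dfun l α t := by exact_mod_cast hd
  have small : ∀ W : ℝ, l ≤ W → 0 < W ∧ RInv l (Tmap l α t) (1 / W) := by
    intro W hW
    have hWp : 0 < W := by linarith
    refine ⟨hWp, rosen_small h1 h2 hTl (by positivity) ?_⟩
    rw [mul_one_div, div_le_one hWp]; exact hW
  rcases lt_or_gt_of_ne h0 with hneg | hpos
  · rw [Real.sign_of_neg hneg]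
    obtain ⟨hVl, hf⟩ := hf hneg
    rcases eq_or_lt_of_le hd with hd1 | hd2
    · rw [← hd1] at hT3 ⊢
      rw [abs_of_neg hneg] at hT3
      push_cast at hT3 ⊢
      set T := Tmap l α t
      obtain ⟨s, rfl⟩ : ∃ s, t = -s := ⟨-t, by ring⟩
      have hs0 : 0 < s := by linarith
      have hs : s ≤ l / 2 := by nlinarith
      have hs1 : s ≤ l * (1 - α) := by linarith
      simp only [neg_neg, mul_one] at hT3
      have hsa : 1 < s * (α * l + l) := by
        rw [← hT3]; exact mul_lt_mul_of_pos_left (by linarith) hs0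
      have hl2 : 2 ≤ l ^ 2 := by
        rcases hl with rfl | hl
        · exfalso
          nlinarith
        · exact hl
      have hsl : 1 ≤ s * (2 * l) := by nlinarith
      have hff : l * (V + s) - (l ^ 2 - 2) * s * V ≤ 2 := by linarith
      have hVlt := rosen_V_lt (by linarith) h2 hl2 hs0 hs hff
      have eW : (1 : ℝ) * l + -1 * V = l - V := by ring
      rw [eW]
      have hW : 0 < l - V := by linarith
      refine ⟨hW, by positivity, ?_, ?_⟩
      · have hD0 : 0 < l - (l ^ 2 - 2) * s := by
          have : (l ^ 2 - 2) * s ≤ (l ^ 2 - 2) * (l / 2) :=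
            mul_le_mul_of_nonneg_left hs (by linarith)
          nlinarith
        have hD2 : l - (l ^ 2 - 2) * s ≤ 2 := by nlinarith
        have hN : (4 - l ^ 2) / 4 ≤ (l - V) * (l - (l ^ 2 - 2) * s) := by
          have hN1 : l ^ 2 - 2 - l * (l ^ 2 - 3) * s ≤ (l - V) * (l - (l ^ 2 - 2) * s) := by
            nlinarith
          refine le_trans ?_ hN1
          rcases le_total 3 (l ^ 2) with h3 | h3
          · have : l * (l ^ 2 - 3) * s ≤ l * (l ^ 2 - 3) * (l / 2) :=
              mul_le_mul_of_nonneg_left hs (mul_nonneg (by linarith) (by linarith))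
            nlinarith
          · nlinarith [mul_nonneg (by linarith : 0 ≤ 3 - l ^ 2) (by linarith : 0 ≤ s * (2 * l) - 1)]
        have hN2 : (l - V) * (l - (l ^ 2 - 2) * s) ≤ (l - V) * 2 :=
          mul_le_mul_of_nonneg_left hD2 hW.le
        rw [div_le_div_iff₀ hW h4]; linarith
      · intro hTneg
        have hform : l * (1 / (l - V) - T) + (l ^ 2 - 2) * T * (1 / (l - V)) ≤ 2 := by
          have hTs : T = 1 / s - l := by field_simp; linarith
          have : l * (1 / (l - V) - T) + (l ^ 2 - 2) * T * (1 / (l - V)) - 2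
              = (l * (V + s) - (l ^ 2 - 2) * s * V - 2) / (s * (l - V)) := by
            rw [hTs]; field_simp; ring
          have h9 : (l * (V + s) - (l ^ 2 - 2) * s * V - 2) / (s * (l - V)) ≤ 0 :=
            div_nonpos_of_nonpos_of_nonneg (by linarith) (by positivity)
          linarith
        refine ⟨(rosen_V_lt (s := -T) (by linarith) h2 hl2 (by linarith) (by linarith) ?_).le, hform⟩
        linarith
    · apply small
      have : (2 : ℝ) ≤ dfun l α t := by exact_mod_cast hd2
      nlinarith
  · rw [Real.sign_of_pos hpos]
    apply small
    nlinarith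

/-- Section 2.3: the α-Rosen convergents `Rₙ/Sₙ` of `x` satisfy
`|x - Rₙ/Sₙ| ≤ αλ/((1+αλ-λ)Sₙ²)`; in particular they converge to `x`. -/
theorem stmt17 (q : ℕ) (hq : 3 ≤ q) (lam α : ℝ)
    (hlam : lam = 2 * Real.cos (Real.pi / q))
    (hα1 : 1 / 2 ≤ α) (hα2 : α ≤ 1 / lam)
    (x : ℝ) (hx : x ∈ Icc (lam * (α - 1)) (α * lam))
    (hx0 : ∀ n : ℕ, (Tmap lam α)^[n] x ≠ 0)
    (R S : ℤ → ℝ)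
    (hRm1 : R (-1) = 1) (hR0 : R 0 = 0)
    (hSm1 : S (-1) = 0) (hS0 : S 0 = 1)
    (hRrec : ∀ n : ℕ, 1 ≤ n →
      R n = (dfun lam α ((Tmap lam α)^[n - 1] x) : ℝ) * lam * R ((n : ℤ) - 1)
        + Real.sign ((Tmap lam α)^[n - 1] x) * R ((n : ℤ) - 2))
    (hSrec : ∀ n : ℕ, 1 ≤ n →
      S n = (dfun lam α ((Tmap lam α)^[n - 1] x) : ℝ) * lam * S ((n : ℤ) - 1)
        + Real.sign ((Tmap lam α)^[n - 1] x) * S ((n : ℤ) - 2)) :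
    (∀ n : ℕ, 1 ≤ n →
      |x - R n / S n| ≤ α * lam / ((1 + α * lam - lam) * (S n) ^ 2)) ∧
    Filter.Tendsto (fun n : ℕ => R n / S n) Filter.atTop (nhds x) := by
  have hq' : (3:ℝ) ≤ q := by exact_mod_cast hq
  have hpi := Real.pi_pos
  have h2 : lam < 2 := by
    have : Real.cos (Real.pi / q) < Real.cos 0 := by
      apply Real.cos_lt_cos_of_nonneg_of_le_pi le_rfl
      · apply div_le_self hpi.le; linarith
      · positivity
    rw [Real.cos_zero] at this
    linarith
  have h1 : 1 ≤ lam := by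
    have : Real.cos (Real.pi / 3) ≤ Real.cos (Real.pi / q) := by
      apply Real.cos_le_cos_of_nonneg_of_le_pi (by positivity) (by linarith)
      gcongr
    rw [Real.cos_pi_div_three] at this
    linarith
  have hl : lam = 1 ∨ 2 ≤ lam ^ 2 := by
    rcases eq_or_lt_of_le hq with h | h
    · left
      rw [hlam, ← h]; push_cast; rw [Real.cos_pi_div_three]; norm_num
    · right
      have hq4 : (4:ℝ) ≤ q := by exact_mod_cast h
      have : Real.cos (Real.pi / 4) ≤ Real.cos (Real.pi / q) := by
        apply Real.cos_le_cos_of_nonneg_of_le_pi (by positivity) (by linarith)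
        gcongr
      rw [Real.cos_pi_div_four] at this
      have h22 : √2 ≤ lam := by linarith
      have := Real.sq_sqrt (show (0:ℝ) ≤ 2 by norm_num)
      nlinarith [Real.sqrt_nonneg 2]
  have ha2 : α * lam ≤ 1 := by
    rwa [le_div_iff₀ (by linarith)] at hα2
  have h4 : 0 < 4 - lam ^ 2 := by nlinarith
  set t : ℕ → ℝ := fun n => (Tmap lam α)^[n] x with ht
  have htS : ∀ n, t (n + 1) = Tmap lam α (t n) := fun n =>
    Function.iterate_succ_apply' _ _ _
  have ht0 : ∀ n, t n ≠ 0 := hx0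
  have htI : ∀ n, lam * (α - 1) ≤ t n ∧ t n ≤ α * lam := by
    intro n
    induction n with
    | zero => exact hx
    | succ n ih =>
      obtain ⟨_, a, b, _⟩ := rosen_T h1 hα1 ha2 ih.1 ih.2 (ht0 n)
      rw [htS]; exact ⟨a, b.le⟩
  set a : ℕ → ℝ := fun n => S ((n : ℤ) - 1) with ha
  set r : ℕ → ℝ := fun n => R ((n : ℤ) - 1) with hr
  have haS : ∀ n : ℕ, S n = a (n + 1) := by
    intro n; simp [ha]
  have hrR : ∀ n : ℕ, R n = r (n + 1) := by
    intro n; simp [hr]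
  have ha0 : a 0 = 0 := by simpa [ha] using hSm1
  have ha1 : a 1 = 1 := by simpa [ha] using hS0
  have hr0 : r 0 = 1 := by simpa [hr] using hRm1
  have hr1 : r 1 = 0 := by simpa [hr] using hR0
  have harec : ∀ n : ℕ, a (n + 2) =
      dfun lam α (t n) * lam * a (n + 1) + Real.sign (t n) * a n := by
    intro n
    have := hSrec (n + 1) (by omega)
    rw [haS] at this
    rw [this]
    have e1 : ((n + 1 : ℕ) : ℤ) - 2 = (n : ℤ) - 1 := by push_cast; ring
    rw [e1]
    rfl
  have hrrec : ∀ n : ℕ, r (n + 2) =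
      dfun lam α (t n) * lam * r (n + 1) + Real.sign (t n) * r n := by
    intro n
    have := hRrec (n + 1) (by omega)
    rw [hrR] at this
    rw [this]
    have e1 : ((n + 1 : ℕ) : ℤ) - 2 = (n : ℤ) - 1 := by push_cast; ring
    rw [e1]
    rfl
  have hinv : ∀ n : ℕ, 0 < a (n + 1) ∧ RInv lam (t n) (a n / a (n + 1)) := by
    intro n
    induction n with
    | zero =>
      rw [ha0, zero_add, ha1]
      refine ⟨one_pos, rosen_small h1 h2 ?_ (by simp) (by simp)⟩
      have := (htI 0).1
      nlinarith
    | succ n ih =>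
      obtain ⟨hp, hi⟩ := ih
      obtain ⟨hW, hi'⟩ := rosen_step h1 h2 hl hα1 ha2 (htI n).1 (htI n).2 (ht0 n) hi
      have e : a (n + 2) = (dfun lam α (t n) * lam + Real.sign (t n) * (a n / a (n + 1)))
          * a (n + 1) := by
        rw [harec]; field_simp
      have hp2 : 0 < a (n + 2) := by rw [e]; positivity
      refine ⟨hp2, ?_⟩
      rw [htS]
      convert hi' using 1
      show a (n + 1) / a (n + 2) = _
      rw [e]; field_simp
  have hsg : ∀ n, |t n| = Real.sign (t n) * t n := by
    intro n
    rcases lt_or_gt_of_ne (ht0 n) with h | h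
    · rw [abs_of_neg h, Real.sign_of_neg h]; ring
    · rw [abs_of_pos h, Real.sign_of_pos h]; ring
  have hsg2 : ∀ n, Real.sign (t n) * Real.sign (t n) = 1 := by
    intro n
    rcases lt_or_gt_of_ne (ht0 n) with h | h
    · rw [Real.sign_of_neg h]; ring
    · rw [Real.sign_of_pos h]; ring
  have hTid : ∀ n, |t n| * (t (n + 1) + lam * dfun lam α (t n)) = 1 := by
    intro n
    rw [htS]
    exact (rosen_T h1 hα1 ha2 (htI n).1 (htI n).2 (ht0 n)).2.2.2
  set δ : ℕ → ℝ := fun n => a n * x - r n with hδ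
  have hδ0 : δ 0 = -1 := by simp [hδ, ha0, hr0]
  have hδS : ∀ n, δ (n + 1) = - t n * δ n := by
    intro n
    induction n with
    | zero => simp [hδ, ha0, ha1, hr0, hr1, ht]
    | succ n ih =>
      have e : δ (n + 2) = dfun lam α (t n) * lam * δ (n + 1) + Real.sign (t n) * δ n := by
        simp only [hδ]; rw [harec, hrrec]; ring
      show δ (n + 2) = _
      rw [e, ih]
      have hT := hTid n
      rw [hsg] at hT
      have hT' : t n * (t (n + 1) + lam * dfun lam α (t n)) = Real.sign (t n) := by
        linear_combination Real.sign (t n) * hT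
          - (t n * (t (n + 1) + lam * dfun lam α (t n))) * hsg2 n
      linear_combination (-δ n) * hT'
  have hQ : ∀ n, (a (n + 1) + t n * a n) * |δ n| = 1 := by
    intro n
    induction n with
    | zero => simp [hδ0, ha0, ha1]
    | succ n ih =>
      have e : |δ (n + 1)| = |t n| * |δ n| := by rw [hδS, abs_mul, abs_neg]
      rw [e, show n + 1 + 1 = n + 2 from rfl, harec]
      have hT := hTid n
      have hs : |t n| * Real.sign (t n) = t n := by
        rw [hsg]; linear_combination t n * hsg2 n
      linear_combination ih + a (n + 1) * |δ n| * hT + a n * |δ n| * hs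
  have herr : ∀ n, x - r (n + 1) / a (n + 1) = δ (n + 1) / a (n + 1) := by
    intro n
    have := (hinv n).1
    simp only [hδ]; field_simp
  constructor
  · intro n _
    rw [haS, hrR, herr, hδS, abs_div, abs_mul, abs_neg]
    obtain ⟨hp, hi⟩ := hinv n
    obtain ⟨g1, g2, g3, -⟩ := rosen_final h1 h2 hl hα1 ha2 (htI n).1 (htI n).2 hi
    have e : a (n + 1) + t n * a n = a (n + 1) * (1 + t n * (a n / a (n + 1))) := by
      field_simp
    have hq := hQ n
    rw [e] at hq
    set w := 1 + t n * (a n / a (n + 1))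
    have e2 : |δ n| = 1 / (a (n + 1) * w) := by
      rw [eq_div_iff (by positivity)]; linarith
    rw [e2, abs_of_pos hp]
    have e3 : |t n| * (1 / (a (n + 1) * w)) / a (n + 1) = |t n| / (w * a (n + 1) ^ 2) := by
      field_simp
    rw [e3, div_le_div_iff₀ (by positivity) (by positivity)]
    have := mul_le_mul_of_nonneg_right g3 (sq_nonneg (a (n + 1)))
    linarith
  · have hle1 : ∀ n, |t n| ≤ 1 := by
      intro n
      have := htI n
      exact abs_le.mpr ⟨by nlinarith, by linarith⟩
    have hprod : ∀ n, |t n| * |t (n + 1)| ≤ lam / 2 := by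
      intro n
      have hneg : ∀ m, t m < 0 → |t m| ≤ lam / 2 := by
        intro m hm
        rw [abs_of_neg hm]
        have := (htI m).1
        nlinarith
      have b0 := hle1 n
      have b1 := hle1 (n + 1)
      have c0 := abs_nonneg (t n)
      have c1 := abs_nonneg (t (n + 1))
      by_cases hA : |t n| ≤ lam / 2
      · nlinarith
      · by_cases hB : t (n + 1) < 0
        · have := hneg _ hB
          nlinarith
        · have hT := hTid n
          rw [abs_of_nonneg (not_lt.mp hB)]
          have hd := (rosen_T h1 hα1 ha2 (htI n).1 (htI n).2 (ht0 n)).1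
          have hdR : (1 : ℝ) ≤ dfun lam α (t n) := by exact_mod_cast hd
          have hA' := (not_le.mp hA).le
          have : lam / 2 * lam ≤ |t n| * (lam * dfun lam α (t n)) := by
            apply mul_le_mul hA' _ (by linarith) c0
            nlinarith
          nlinarith
    have hδle : ∀ n, |δ n| ≤ (lam / 2) ^ (n / 2) ∧ |δ (n + 1)| ≤ (lam / 2) ^ ((n + 1) / 2)
        ∧ |δ n| ≤ 1 := by
      intro n
      induction n with
      | zero => 
        have e : |δ 1| = |t 0| * |δ 0| := by rw [hδS, abs_mul, abs_neg]
        rw [zero_add, e, hδ0]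
        simpa using hle1 0
      | succ n ih =>
        have e : |δ (n + 1)| = |t n| * |δ n| := by rw [hδS, abs_mul, abs_neg]
        have e' : |δ (n + 2)| = |t (n + 1)| * |δ (n + 1)| := by rw [hδS, abs_mul, abs_neg]
        refine ⟨ih.2.1, ?_, ?_⟩
        · show |δ (n + 2)| ≤ (lam / 2) ^ ((n + 2) / 2)
          rw [e', e, show (n + 2) / 2 = n / 2 + 1 by omega, pow_succ]
          calc |t (n + 1)| * (|t n| * |δ n|) = |δ n| * (|t n| * |t (n + 1)|) := by ring
            _ ≤ _ := mul_le_mul ih.1 (hprod n) (by positivity) (by positivity)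
        · rw [e]
          exact mul_le_one₀ (hle1 n) (abs_nonneg _) ih.2.2
    set C := 1 + 8 / (4 - lam ^ 2) with hC
    have hCp : 0 < C := by positivity
    have hbound : ∀ n, |x - r (n + 1) / a (n + 1)| ≤ C * (lam / 2) ^ ((n + 1) / 2) := by
      intro n
      obtain ⟨hp, hi⟩ := hinv n
      obtain ⟨g1, g2, -, g4⟩ := rosen_final h1 h2 hl hα1 ha2 (htI n).1 (htI n).2 hi
      have e : a (n + 1) + t n * a n = a (n + 1) * (1 + t n * (a n / a (n + 1))) := by
        field_simp
      have hq := hQ n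
      rw [e] at hq
      have hD := hδle n
      rw [herr, abs_div, abs_of_pos hp, div_le_iff₀ hp]
      have k1 : 1 ≤ a (n + 1) * C := by
        calc (1:ℝ) = a (n + 1) * (1 + t n * (a n / a (n + 1))) * |δ n| := hq.symm
          _ ≤ a (n + 1) * (1 + t n * (a n / a (n + 1))) * 1 :=
            mul_le_mul_of_nonneg_left hD.2.2 (by positivity)
          _ ≤ a (n + 1) * C := by
            rw [mul_one]; exact mul_le_mul_of_nonneg_left g4 hp.le
      have k2 : (0:ℝ) ≤ (lam / 2) ^ ((n + 1) / 2) := by positivity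
      nlinarith [hD.2.1, mul_le_mul_of_nonneg_right k1 k2]
    have hlim : Filter.Tendsto (fun n : ℕ => C * (lam / 2) ^ ((n + 1) / 2)) Filter.atTop
        (nhds 0) := by
      have p := tendsto_pow_atTop_nhds_zero_of_lt_one (r := lam / 2) (by linarith) (by linarith)
      have p2 : Filter.Tendsto (fun n : ℕ => (n + 1) / 2) Filter.atTop Filter.atTop :=
        (Nat.tendsto_div_const_atTop (by norm_num)).comp (Filter.tendsto_add_atTop_nat 1)
      simpa using (p.comp p2).const_mul C
    rw [tendsto_iff_dist_tendsto_zero]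
    refine squeeze_zero (fun _ => dist_nonneg) (fun n => ?_) hlim
    rw [dist_comm, Real.dist_eq, haS, hrR]
    exact hbound n
end
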